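/- arXiv:1004.5338 — 2 statements merged into one kernel-verified Lean document; each statement's English description precedes it below -/
import Mathlib

section
/- Let T > 0, let g : [0,T] → [0,∞) be a non-negative, strictly increasing continuous function with inverse g⁻¹, and let n : [0,T] → [0,∞) be bounded and measurable. Fix 0 < t ≤ T, set n*_t = sup_{0≤s≤t} n(s), Λ(t) = ∫_0^t n(s) ds, and define F(x,t) = e^{−Λ(t)} · Σ_{m=0}^∞ (1/m!) ∫_{(0,t)^m} 1{g(s₁)+⋯+g(s_m) ≤ x} n(s₁)⋯n(s_m) ds₁⋯ds_m. If g⁻¹ ∈ C^{0,γ}((g(0),g(t))) for some 0 < γ ≤ 1, then F(·,t) ∈ C^{0,γ}((0,∞)) and [F(·,t)]_{C^{0,γ}((0,∞))} ≤ C_{n,t} · [g⁻¹]_{C^{0,γ}((g(0),g(t)))}, where C_{n,t} = n*_t · (1 − e^{−Λ(t)}) / Λ(t). -/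
/-!
The set of `s ∈ (0, t)` with `a < g s ≤ b` has diameter at most `H (b - a) ^ γ`, because any two of
its points are `ginv` of points of `(g 0, g t)` at distance at most `b - a`. So the one-particle
function `φ c = ∫_{(0,t)} 1{g s ≤ c} n s ds` oscillates by at most `K = n* H |x - y| ^ γ` between
points at distance `|x - y|`. Integrating out one coordinate writes the `(m+1)`-st integral of the
series as the integral of `φ (x - ∑ g(sᵢ))` against `∏ n(sᵢ)` over the other `m` coordinates
(`boxIntegral_succ`), so this integral oscillates by at most `Λ ^ m K`. The zeroth term is the same
at `x` and `y`, both being positive, and `e^{-Λ} ∑ Λ ^ m / (m + 1)! = (1 - e^{-Λ}) / Λ`.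

If `Λ = 0` the claimed constant is `0` in the `x / 0 = 0` convention; the bound is still true since
`0 ≤ φ ≤ Λ` allows `K = 0`.
-/

open MeasureTheory

/-- The cumulative distribution function at time `t` of the Poisson stochastic integral
`X(t) = ∫_0^t g(s) N(ds)`, given by its compound-Poisson series representation. -/
noncomputable def poissonCDF (g n : ℝ → ℝ) (x t : ℝ) : ℝ :=
  Real.exp (-(∫ s in (0:ℝ)..t, n s)) *
    ∑' m : ℕ, ((m.factorial : ℝ))⁻¹ *
      ∫ s in Set.univ.pi (fun _ : Fin m => Set.Ioo (0:ℝ) t),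
        Set.indicator {p : Fin m → ℝ | ∑ i, g (p i) ≤ x} (fun p => ∏ i, n (p i)) s

namespace PoissonHolder

open Set

/-- The `m`-particle integral `∫ 1{∑ G(pᵢ) ≤ x} ∏ N(pᵢ) dμ^m` of the compound-Poisson series. -/
noncomputable def boxIntegral (μ : Measure ℝ) (G N : ℝ → ℝ) (m : ℕ) (x : ℝ) : ℝ :=
  ∫ p, Set.indicator {p : Fin m → ℝ | ∑ i, G (p i) ≤ x} (fun p => ∏ i, N (p i)) p
    ∂(Measure.pi fun _ : Fin m => μ)

/-- The one-particle function `∫ 1{G s ≤ c} N s dμ`. -/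
noncomputable def oneParticle (μ : Measure ℝ) (G N : ℝ → ℝ) (c : ℝ) : ℝ :=
  ∫ s, Set.indicator {s : ℝ | G s ≤ c} N s ∂μ

section General

variable {μ : Measure ℝ} [SigmaFinite μ] {G N : ℝ → ℝ}

lemma integrable_prod (hN : Integrable N μ) (m : ℕ) :
    Integrable (fun p : Fin m → ℝ => ∏ i, N (p i)) (Measure.pi fun _ : Fin m => μ) :=
  Integrable.fintype_prod (f := fun _ : Fin m => N) (fun _ => hN)

lemma integral_prod_eq (m : ℕ) :
    ∫ p, (∏ i, N (p i)) ∂(Measure.pi fun _ : Fin m => μ) = (∫ s, N s ∂μ) ^ m := by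
  rw [integral_fintype_prod_eq_prod (fun _ : Fin m => N)]
  simp

lemma measurableSet_sum_le (hG : Measurable G) (m : ℕ) (x : ℝ) :
    MeasurableSet {p : Fin m → ℝ | ∑ i, G (p i) ≤ x} :=
  measurableSet_le (by fun_prop) measurable_const

lemma integrable_indicator (hG : Measurable G) (hN : Integrable N μ) (m : ℕ) (x : ℝ) :
    Integrable (Set.indicator {p : Fin m → ℝ | ∑ i, G (p i) ≤ x} (fun p => ∏ i, N (p i)))
      (Measure.pi fun _ : Fin m => μ) :=
  (integrable_prod hN m).indicator (measurableSet_sum_le hG m x)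

/-- Integrating out the first coordinate. -/
lemma boxIntegral_succ (hG : Measurable G) (hN : Integrable N μ) (m : ℕ) (x : ℝ) :
    Integrable (fun q : Fin m → ℝ => (∏ i, N (q i)) * oneParticle μ G N (x - ∑ i, G (q i)))
      (Measure.pi fun _ : Fin m => μ) ∧
    boxIntegral μ G N (m + 1) x =
      ∫ q, (∏ i, N (q i)) * oneParticle μ G N (x - ∑ i, G (q i))
        ∂(Measure.pi fun _ : Fin m => μ) := by
  have mp := (measurePreserving_piFinSuccAbove (fun _ : Fin (m + 1) => μ) 0).symm
  have hint := integrable_indicator hG hN (m + 1) x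
  rw [← mp.integrable_comp_emb (MeasurableEquiv.measurableEmbedding _)] at hint
  have hinner : ∀ q : Fin m → ℝ,
      ∫ s, (Set.indicator {p : Fin (m + 1) → ℝ | ∑ i, G (p i) ≤ x} (fun p => ∏ i, N (p i)) ∘
        (MeasurableEquiv.piFinSuccAbove (fun _ : Fin (m + 1) => ℝ) 0).symm) (s, q) ∂μ =
      (∏ i, N (q i)) * oneParticle μ G N (x - ∑ i, G (q i)) := by
    intro q
    rw [oneParticle, ← integral_const_mul]
    congr 1
    ext s
    have hset : (∑ i : Fin (m + 1), G ((Fin.cons s q : Fin (m + 1) → ℝ) i) ≤ x) ↔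
        G s ≤ x - ∑ i, G (q i) := by
      rw [Fin.sum_univ_succ]
      simp only [Fin.cons_zero, Fin.cons_succ]
      exact le_sub_iff_add_le.symm
    simp only [Function.comp, MeasurableEquiv.piFinSuccAbove_symm_apply, Fin.insertNthEquiv_zero,
      Set.indicator_apply, Set.mem_ofPred_eq, Fin.consEquiv, Equiv.coe_fn_mk, hset]
    split_ifs
    · rw [Fin.prod_univ_succ]
      simp only [Fin.cons_zero, Fin.cons_succ]
      ring
    · simp
  refine ⟨hint.integral_prod_right.congr (Filter.Eventually.of_forall hinner), ?_⟩
  rw [boxIntegral, ← mp.integral_comp (MeasurableEquiv.measurableEmbedding _)]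
  refine (integral_prod_symm _ hint).trans ?_
  exact integral_congr_ae (Filter.Eventually.of_forall hinner)

/-- Pointwise oscillation at most `K` of the one-particle function passes through the integration
over the remaining `m` coordinates, whose total mass is `Λ ^ m`. -/
lemma abs_boxIntegral_succ_sub_le (hG : Measurable G) (hN : Integrable N μ) (hN0 : ∀ s, 0 ≤ N s)
    {x y K : ℝ}
    (hK : ∀ r, |oneParticle μ G N (x - r) - oneParticle μ G N (y - r)| ≤ K) (m : ℕ) :
    |boxIntegral μ G N (m + 1) x - boxIntegral μ G N (m + 1) y| ≤ (∫ s, N s ∂μ) ^ m * K := by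
  obtain ⟨ix, ex⟩ := boxIntegral_succ hG hN m x
  obtain ⟨iy, ey⟩ := boxIntegral_succ hG hN m y
  rw [ex, ey, ← integral_sub ix iy, ← integral_prod_eq m, ← integral_mul_const]
  refine (abs_integral_le_integral_abs).trans ?_
  refine integral_mono (ix.sub iy).abs ((integrable_prod hN m).mul_const K) fun q => ?_
  have h0 : 0 ≤ ∏ i, N (q i) := Finset.prod_nonneg fun i _ => hN0 _
  simp only [← mul_sub, abs_mul, abs_of_nonneg h0]
  exact mul_le_mul_of_nonneg_left (hK _) h0

lemma abs_boxIntegral_le (hG : Measurable G) (hN : Integrable N μ) (hN0 : ∀ s, 0 ≤ N s)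
    (m : ℕ) (x : ℝ) : |boxIntegral μ G N m x| ≤ (∫ s, N s ∂μ) ^ m := by
  have h0 : ∀ p : Fin m → ℝ, 0 ≤ ∏ i, N (p i) := fun p => Finset.prod_nonneg fun i _ => hN0 _
  rw [← integral_prod_eq m, boxIntegral, abs_of_nonneg
    (integral_nonneg fun p => Set.indicator_nonneg (fun p _ => h0 p) p)]
  exact integral_mono (integrable_indicator hG hN m x) (integrable_prod hN m)
    fun p => Set.indicator_le_self' (fun p _ => h0 p) p

lemma boxIntegral_zero {x : ℝ} (hx : 0 < x) : boxIntegral μ G N 0 x = 1 := by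
  simp [boxIntegral, hx.le, integral_unique, Measure.real]

lemma summable_shift (L : ℝ) : Summable fun m : ℕ => L ^ m / ((m + 1).factorial : ℝ) := by
  refine Summable.of_norm_bounded (Real.summable_pow_div_factorial |L|) fun m => ?_
  rw [norm_div, norm_pow, Real.norm_eq_abs, Real.norm_natCast]
  have := Nat.factorial_le (Nat.le_succ m)
  gcongr

lemma tsum_shift {L : ℝ} (hL : L ≠ 0) :
    ∑' m : ℕ, L ^ m / ((m + 1).factorial : ℝ) = (Real.exp L - 1) / L := by
  have h := (Real.summable_pow_div_factorial L).tsum_eq_zero_add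
  have he : Real.exp L = ∑' m : ℕ, L ^ m / (m.factorial : ℝ) := by
    rw [Real.exp_eq_exp_ℝ, NormedSpace.exp_eq_tsum_div]
  rw [he, eq_div_iff hL, ← tsum_mul_right, h]
  simp only [pow_zero, Nat.factorial_zero, Nat.cast_one, div_one, add_sub_cancel_left]
  refine tsum_congr fun m => ?_
  rw [pow_succ]
  ring

/-- The terms `m = 0` cancel, which needs `x` and `y` positive; the term `m + 1` of the difference is
at most `Λ ^ m K / (m + 1)!`. -/
lemma abs_tsum_sub_le (hG : Measurable G) (hN : Integrable N μ) (hN0 : ∀ s, 0 ≤ N s)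
    {x y K : ℝ} (hx : 0 < x) (hy : 0 < y)
    (hK : ∀ r, |oneParticle μ G N (x - r) - oneParticle μ G N (y - r)| ≤ K) :
    |∑' m : ℕ, (m.factorial : ℝ)⁻¹ * boxIntegral μ G N m x -
      ∑' m : ℕ, (m.factorial : ℝ)⁻¹ * boxIntegral μ G N m y| ≤
      K * ∑' m : ℕ, (∫ s, N s ∂μ) ^ m / ((m + 1).factorial : ℝ) := by
  have hs : ∀ z, Summable fun m : ℕ => (m.factorial : ℝ)⁻¹ * boxIntegral μ G N m z := by
    intro z
    refine Summable.of_norm_bounded (Real.summable_pow_div_factorial (∫ s, N s ∂μ)) fun m => ?_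
    rw [norm_mul, norm_inv, Real.norm_natCast, Real.norm_eq_abs, div_eq_inv_mul]
    exact mul_le_mul_of_nonneg_left (abs_boxIntegral_le hG hN hN0 m z) (by positivity)
  rw [(hs x).tsum_eq_zero_add, (hs y).tsum_eq_zero_add, boxIntegral_zero hx, boxIntegral_zero hy,
    add_sub_add_left_eq_sub,
    ← ((summable_nat_add_iff 1).2 (hs x)).tsum_sub ((summable_nat_add_iff 1).2 (hs y)),
    ← tsum_mul_left, ← Real.norm_eq_abs]
  refine tsum_of_norm_bounded ((summable_shift _).mul_left K).hasSum fun m => ?_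
  rw [← mul_sub, norm_mul, norm_inv, Real.norm_natCast, Real.norm_eq_abs]
  calc _ ≤ ((m + 1).factorial : ℝ)⁻¹ * ((∫ s, N s ∂μ) ^ m * K) :=
        mul_le_mul_of_nonneg_left (abs_boxIntegral_succ_sub_le hG hN hN0 hK m) (by positivity)
    _ = _ := by ring

lemma oneParticle_nonneg (hN0 : ∀ s, 0 ≤ N s) (c : ℝ) : 0 ≤ oneParticle μ G N c :=
  integral_nonneg fun s => Set.indicator_nonneg (fun s _ => hN0 s) s

lemma oneParticle_le (hG : Measurable G) (hN : Integrable N μ) (hN0 : ∀ s, 0 ≤ N s) (c : ℝ) :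
    oneParticle μ G N c ≤ ∫ s, N s ∂μ :=
  integral_mono (hN.indicator (measurableSet_le hG measurable_const)) hN
    fun s => Set.indicator_le_self' (fun s _ => hN0 s) s

end General

/-- If `{s ∈ A | a < G s ≤ b}` has diameter at most `D` and `N ≤ M` on `A`, then the one-particle
function over `A` increases by at most `M * D` from `a` to `b`. -/
lemma oneParticle_sub_le {A : Set ℝ} (hA : MeasurableSet A) {G N : ℝ → ℝ} (hG : Measurable G)
    (hN : Integrable N (volume.restrict A)) {M D a b : ℝ} (hM : 0 ≤ M) (hD : 0 ≤ D)
    (hNM : ∀ s ∈ A, N s ≤ M) (hab : a ≤ b)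
    (hdiam : ∀ u ∈ A, ∀ v ∈ A, a < G u → G u ≤ b → a < G v → G v ≤ b → |u - v| ≤ D) :
    oneParticle (volume.restrict A) G N b - oneParticle (volume.restrict A) G N a ≤ M * D := by
  have hle : ∀ c, MeasurableSet {s : ℝ | G s ≤ c} := fun c => measurableSet_le hG measurable_const
  set S : Set ℝ := {s | G s ≤ b} \ {s | G s ≤ a} with hS
  have hSm : MeasurableSet S := (hle b).diff (hle a)
  have hvol : volume (S ∩ A) ≤ ENNReal.ofReal D := by
    refine (Real.volume_le_diam _).trans (Metric.ediam_le fun u hu v hv => ?_)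
    rw [edist_dist, Real.dist_eq]
    exact ENNReal.ofReal_le_ofReal (hdiam u hu.2 v hv.2 (not_le.1 hu.1.2) hu.1.1
      (not_le.1 hv.1.2) hv.1.1)
  have hfin : volume (S ∩ A) ≠ ⊤ := ne_top_of_le_ne_top ENNReal.ofReal_ne_top hvol
  rw [oneParticle, oneParticle,
    ← integral_sub (hN.indicator (hle b)) (hN.indicator (hle a))]
  have heq : ∀ s, Set.indicator {s : ℝ | G s ≤ b} N s - Set.indicator {s : ℝ | G s ≤ a} N s =
      S.indicator N s := by
    intro s
    by_cases h1 : G s ≤ a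
    · have h2 : G s ≤ b := h1.trans hab
      simp [hS, h1, h2]
    · simp [hS, Set.indicator_apply, h1]
  simp only [heq]
  rw [integral_indicator hSm, Measure.restrict_restrict hSm]
  calc ∫ s in S ∩ A, N s ≤ ∫ s in S ∩ A, M :=
        setIntegral_mono_on (hN.mono_measure (Measure.restrict_mono inter_subset_right le_rfl))
          (integrableOn_const hfin) (hSm.inter hA) fun s hs => hNM s hs.2
    _ = M * volume.real (S ∩ A) := by simp [mul_comm]
    _ ≤ M * D := mul_le_mul_of_nonneg_left (ENNReal.toReal_le_of_le_ofReal hD hvol) hM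

/-- Only the values on `(0, t)` enter the series, so `g` and `n` may be changed outside. -/
lemma poissonCDF_eq {g n G N : ℝ → ℝ} {t : ℝ} (hG : ∀ s ∈ Ioo 0 t, G s = g s)
    (hN : ∀ s ∈ Ioo 0 t, N s = n s) (x : ℝ) :
    poissonCDF g n x t = Real.exp (-(∫ s in (0:ℝ)..t, n s)) *
      ∑' m : ℕ, (m.factorial : ℝ)⁻¹ * boxIntegral (volume.restrict (Ioo 0 t)) G N m x := by
  unfold poissonCDF boxIntegral
  congr 1
  refine tsum_congr fun m => ?_
  congr 1
  rw [← Measure.restrict_pi_pi, ← volume_pi]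
  refine setIntegral_congr_fun (MeasurableSet.univ_pi fun _ => measurableSet_Ioo) fun p hp => ?_
  have h1 : ∑ i, G (p i) = ∑ i, g (p i) := Finset.sum_congr rfl fun i _ => hG _ (hp i trivial)
  have h2 : ∏ i, N (p i) = ∏ i, n (p i) := Finset.prod_congr rfl fun i _ => hN _ (hp i trivial)
  simp only [Set.indicator_apply, Set.mem_ofPred_eq, h1, h2]

end PoissonHolder

open PoissonHolder

/-- **Hölder continuity of the CDF of a Poisson stochastic integral**
(Theorem 3.1 of the paper).  If `g` is nonnegative, strictly increasing and continuous
on `[0,T]` with inverse `ginv` which is `γ`-Hölder on `(g(0), g(t))` with seminorm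
(i.e. every Hölder constant) `H`, and `n` is bounded, measurable and nonnegative with
supremum `n*_t` on `[0,t]`, then `F(·,t)` is `γ`-Hölder on `(0,∞)` with constant
`C_{n,t} · H`, where `C_{n,t} = n*_t (1 − e^{−Λ(t)}) / Λ(t)` and `Λ(t) = ∫_0^t n`. -/
theorem poissonCDF_holder (T t : ℝ) (hT : 0 < T) (ht0 : 0 < t) (htT : t ≤ T)
    (g ginv n : ℝ → ℝ)
    (hg_nonneg : ∀ s ∈ Set.Icc (0:ℝ) T, 0 ≤ g s)
    (hg_mono : StrictMonoOn g (Set.Icc 0 T))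
    (hg_cont : ContinuousOn g (Set.Icc 0 T))
    (hginv : ∀ s ∈ Set.Icc (0:ℝ) T, ginv (g s) = s)
    (hn_meas : Measurable n)
    (hn_nonneg : ∀ s ∈ Set.Icc (0:ℝ) T, 0 ≤ n s)
    (nstar : ℝ) (hnstar : IsLUB (n '' Set.Icc 0 t) nstar)
    (γ H : ℝ) (hγ0 : 0 < γ) (hγ1 : γ ≤ 1) (hH : 0 ≤ H)
    (hHolder : ∀ x ∈ Set.Ioo (g 0) (g t), ∀ y ∈ Set.Ioo (g 0) (g t),
      |ginv x - ginv y| ≤ H * |x - y| ^ γ) :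
    ∀ x ∈ Set.Ioi (0:ℝ), ∀ y ∈ Set.Ioi (0:ℝ),
      |poissonCDF g n x t - poissonCDF g n y t| ≤
        (nstar * (1 - Real.exp (-(∫ s in (0:ℝ)..t, n s))) / (∫ s in (0:ℝ)..t, n s))
          * H * |x - y| ^ γ := by
  intro x hx y hy
  have hsub : Set.Ioo 0 t ⊆ Set.Icc 0 T := fun s hs => ⟨hs.1.le, hs.2.le.trans htT⟩
  have hsub' : Set.Ioo 0 t ⊆ Set.Icc 0 t := Set.Ioo_subset_Icc_self
  -- Replacements for `g` and `n` that are measurable, resp. nonnegative, on the whole line.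
  let G : ℝ → ℝ := Set.IccExtend hT.le ((Set.Icc 0 T).domRestrict g)
  let N : ℝ → ℝ := (Set.Ioo 0 t).indicator n
  have hGm : Measurable G := (hg_cont.domRestrict.Icc_extend' (h := hT.le)).measurable
  have hGg : ∀ s ∈ Set.Ioo 0 t, G s = g s := fun s hs => by
    simp only [G, Set.IccExtend_of_mem hT.le _ (hsub hs), Set.domRestrict_apply]
  have hNn : ∀ s ∈ Set.Ioo 0 t, N s = n s := fun s hs => Set.indicator_of_mem hs n
  have hN0 : ∀ s, 0 ≤ N s := Set.indicator_nonneg fun s hs => hn_nonneg s (hsub hs)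
  have hNstar : ∀ s ∈ Set.Ioo 0 t, N s ≤ nstar := fun s hs => by
    rw [hNn s hs]
    exact hnstar.1 ⟨s, hsub' hs, rfl⟩
  have hstar0 : 0 ≤ nstar :=
    (hn_nonneg 0 ⟨le_rfl, hT.le⟩).trans (hnstar.1 ⟨0, ⟨le_rfl, ht0.le⟩, rfl⟩)
  set μ : Measure ℝ := volume.restrict (Set.Ioo 0 t) with hμ
  have hNi : Integrable N μ := by
    refine Integrable.of_bound (hn_meas.indicator measurableSet_Ioo).aestronglyMeasurable nstar ?_
    filter_upwards [ae_restrict_mem measurableSet_Ioo] with s hs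
    rw [Real.norm_eq_abs, abs_of_nonneg (hN0 s)]
    exact hNstar s hs
  have hΛ : ∫ s in (0:ℝ)..t, n s = ∫ s, N s ∂μ := by
    rw [intervalIntegral.integral_of_le ht0.le, integral_Ioc_eq_integral_Ioo]
    exact (setIntegral_congr_fun measurableSet_Ioo hNn).symm
  have hD : 0 ≤ H * |x - y| ^ γ := mul_nonneg hH (by positivity)
  have hinc : ∀ a b, a ≤ b → b - a = |x - y| →
      |oneParticle μ G N b - oneParticle μ G N a| ≤ nstar * (H * |x - y| ^ γ) := by
    intro a b hab hba
    have hmono : oneParticle μ G N a ≤ oneParticle μ G N b :=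
      integral_mono (hNi.indicator (measurableSet_le hGm measurable_const))
        (hNi.indicator (measurableSet_le hGm measurable_const))
        (Set.indicator_le_indicator_of_subset (fun s (hs : G s ≤ a) => hs.trans hab) hN0)
    rw [abs_of_nonneg (sub_nonneg.2 hmono)]
    refine oneParticle_sub_le measurableSet_Ioo hGm hNi hstar0 hD hNstar hab ?_
    intro u hu v hv hau hub hav hvb
    rw [hGg u hu] at hau hub
    rw [hGg v hv] at hav hvb
    have hmem : ∀ s ∈ Set.Ioo 0 t, g s ∈ Set.Ioo (g 0) (g t) := fun s hs =>
      ⟨hg_mono ⟨le_rfl, hT.le⟩ (hsub hs) hs.1, hg_mono (hsub hs) ⟨ht0.le, htT⟩ hs.2⟩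
    have h := hHolder _ (hmem u hu) _ (hmem v hv)
    rw [hginv u (hsub hu), hginv v (hsub hv)] at h
    refine h.trans (mul_le_mul_of_nonneg_left ?_ hH)
    refine Real.rpow_le_rpow (abs_nonneg _) ?_ hγ0.le
    rw [← hba, abs_le]
    constructor <;> linarith
  have hK : ∀ r, |oneParticle μ G N (x - r) - oneParticle μ G N (y - r)| ≤
      nstar * (H * |x - y| ^ γ) := by
    intro r
    rcases le_total x y with h | h
    · rw [abs_sub_comm]
      exact hinc _ _ (by linarith) (by rw [abs_sub_comm, abs_of_nonneg (sub_nonneg.2 h)]; ring)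
    · exact hinc _ _ (by linarith) (by rw [abs_of_nonneg (sub_nonneg.2 h)]; ring)
  rw [poissonCDF_eq hGg hNn, poissonCDF_eq hGg hNn, ← mul_sub, abs_mul, Real.abs_exp, hΛ, ← hμ]
  rcases eq_or_ne (∫ s, N s ∂μ) 0 with h0 | h0
  · have hz : ∀ c, oneParticle μ G N c = 0 := fun c =>
      le_antisymm ((oneParticle_le hGm hNi hN0 c).trans h0.le) (oneParticle_nonneg hN0 c)
    have h := abs_tsum_sub_le hGm hNi hN0 (K := 0) hx hy (fun r => by simp [hz])
    rw [zero_mul] at h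
    simpa [h0] using h
  · have h := abs_tsum_sub_le hGm hNi hN0 hx hy hK
    rw [tsum_shift h0] at h
    refine (mul_le_mul_of_nonneg_left h (Real.exp_pos _).le).trans (le_of_eq ?_)
    have he : Real.exp (-∫ s, N s ∂μ) * Real.exp (∫ s, N s ∂μ) = 1 := by
      rw [← Real.exp_add]; simp
    field_simp
    linear_combination (nstar * H * |x - y| ^ γ) * he
end

section
/- Let T, L > 0. Let g : [0,T] → [0,∞) be strictly increasing, continuous, Lipschitz with constant L_g, with inverse g⁻¹ ∈ C^{0,γ}((g(0),g(T))) for some 0 < γ ≤ 1; let n : [0,T] → [0,∞) be Lipschitz with constant L_n and set n*_T = sup_{0≤s≤T} n(s). Define the exact CDF F(x,t) = e^{−Λ(t)} Σ_{m=0}^∞ (1/m!) ∫_{(0,t)^m} 1{g(s₁)+⋯+g(s_m) ≤ x} n(s₁)⋯n(s_m) ds₁⋯ds_m with Λ(t) = ∫_0^t n(s) ds. For step sizes δ, h > 0 with M = L/δ and N = T/h positive integers, put x_j = jδ (0 ≤ j ≤ M), t_i = ih, k_i = ⌊g(t_i)/δ⌋ + 1, λ_i = |δk_i − g(t_i)|/δ,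 and define the finite-difference approximation by F⁰_j = F(x_j, 0) and F^{i+1}_j = (1 − h·n(t_i))·F^i_j + h·n(t_i)·[(1 − λ_i)·F^i_{j−k_i} + λ_i·F^i_{j−k_i+1}], with the convention F^i_m = 0 whenever m < 0. Then there exists a constant C > 0, depending only on g, n, T, L and γ, such that for all such δ, h satisfying the stability criterion h·n*_T < 1, the discrete L¹ error satisfies Σ_{j=0}^M δ·|F^N_j − F(x_j, T)| ≤ C·(h^γ + δ^γ). -/
/-!
The exact distribution function `F(·,t)` is the sum of the atom `e^{-Λ(t)} 1{0 ≤ x}` (no jump) and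
of a part that is `γ`-Hölder in `x`: since `g⁻¹` is `γ`-Hölder, the set of times `s` with `g s` in
an interval of length `ε` has length at most `H ε^γ`, which controls the one-jump term and, by
conditioning on one jump, every term with at least one jump (`jump_holder`, `jumpSum_holder`).

The scheme is a forward Euler step for `∂ₜF(x,t) = n(t) (F(x - g t, t) - F(x,t))` combined with
linear interpolation of `F(x_j - g t_i, t_i)` between two grid points. Its truncation error at a
grid point has two sources.

* Time: the increment of the `m`-jump term over `(t, t+h]` comes, up to `O(h²)`, from exactly one
  jump in that interval (`jump_expansion`), and the size of that jump may be replaced by `g t`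
  at cost `h · O(h^γ)`, plus `O(h)` at the points `x ∈ [g t, g (t+h))` that the atom crosses
  (`jump_freeze`, `jumpSum_step`, `poissonCDF_step`). There are at most `Lg h/δ + 1` such grid
  points.
* Space: the interpolation error is `O(δ^γ)` except `O(1)` on a cell that contains the atom
  (`poissonCDF_interp`); it is multiplied by `h n(t_i)`.

Summed against `δ`, each step therefore contributes `h · O(h^γ + δ^γ)`. Under `h n* < 1` a step
forms a convex combination of copies of the error shifted to the right, and the error vanishes at
negative indices, so the discrete `L¹` norm does not increase and the truncation errors simply add
up over the `N = T/h` steps (`l1_stability`, `scheme_bound`). The estimates are carried out for `g`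
and `n` extended by constants outside `[0,T]`, which does not affect `F` on `[0,T]`
(`poissonCDF_congr`).
-/

open MeasureTheory

/-! ### The terms of the compound-Poisson series as iterated integrals -/

/-- The data of the problem after extending `g` and `n` from `[0,T]` to all of `ℝ` by constants.
The Hölder bound on `g⁻¹`, with constant `H`, is recorded as a lower bound on the increments of
`g` on `(0,T)`; `K` is an upper bound of `n`. -/
structure SchemeData (g n : ℝ → ℝ) (T K Lg Ln H γ : ℝ) : Prop where
  T_pos : 0 < T
  K_nonneg : 0 ≤ K
  Lg_nonneg : 0 ≤ Lg
  Ln_nonneg : 0 ≤ Ln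
  H_nonneg : 0 ≤ H
  γ_pos : 0 < γ
  γ_le : γ ≤ 1
  g_cont : Continuous g
  g_nonneg : ∀ s, 0 ≤ g s
  g_mono : Monotone g
  g_lip : ∀ s u, |g s - g u| ≤ Lg * |s - u|
  g_inv : ∀ s ∈ Set.Ioo 0 T, ∀ u ∈ Set.Ioo 0 T, |s - u| ≤ H * |g s - g u| ^ γ
  n_cont : Continuous n
  n_nonneg : ∀ s, 0 ≤ n s
  n_le : ∀ s, n s ≤ K
  n_lip : ∀ s u, |n s - n u| ≤ Ln * |s - u|

/-- The unnormalised `m`-jump distribution function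
`∫_{(0,t)^m} 1{∑ g(sᵢ) ≤ x} ∏ n(sᵢ) ds`, written as an iterated integral. -/
noncomputable def jumpCDF (g n : ℝ → ℝ) (t : ℝ) : ℕ → ℝ → ℝ
  | 0, x => if 0 ≤ x then 1 else 0
  | m + 1, x => ∫ s in (0:ℝ)..t, n s * jumpCDF g n t m (x - g s)

namespace SchemeData

variable {g n : ℝ → ℝ} {T K Lg Ln H γ : ℝ}

lemma intInt (D : SchemeData g n T K Lg Ln H γ) (a b : ℝ) :
    IntervalIntegrable n volume a b := D.n_cont.intervalIntegrable a b

lemma intInt_mul (D : SchemeData g n T K Lg Ln H γ) {f : ℝ → ℝ} {c : ℝ} (hf : Measurable f)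
    (hc : ∀ x, |f x| ≤ c) (x a b : ℝ) :
    IntervalIntegrable (fun s => n s * f (x - g s)) volume a b := by
  have h := D.intInt a b
  have hm : Measurable (fun s => f (x - g s)) :=
    hf.comp (measurable_const.sub D.g_cont.measurable)
  exact ⟨h.1.mul_bdd hm.aestronglyMeasurable (Filter.Eventually.of_forall fun s => hc _),
    h.2.mul_bdd hm.aestronglyMeasurable (Filter.Eventually.of_forall fun s => hc _)⟩

lemma abs_int_le (D : SchemeData g n T K Lg Ln H γ) {u : ℝ → ℝ} {c a b : ℝ} (hab : a ≤ b)
    (hu : ∀ s ∈ Set.Ioc a b, |u s| ≤ c) :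
    |∫ s in a..b, n s * u s| ≤ (∫ s in a..b, n s) * c := by
  rw [← intervalIntegral.integral_mul_const c n, ← Real.norm_eq_abs]
  refine intervalIntegral.norm_integral_le_of_norm_le (g := fun s => n s * c) hab
    (Filter.Eventually.of_forall fun s hs => ?_) ((D.intInt a b).mul_const c)
  rw [norm_mul, Real.norm_eq_abs, Real.norm_eq_abs, abs_of_nonneg (D.n_nonneg s)]
  exact mul_le_mul_of_nonneg_left (hu s hs) (D.n_nonneg s)

lemma int_nonneg (D : SchemeData g n T K Lg Ln H γ) {a b : ℝ} (hab : a ≤ b) :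
    0 ≤ ∫ s in a..b, n s :=
  intervalIntegral.integral_nonneg hab fun s _ => D.n_nonneg s

lemma int_le (D : SchemeData g n T K Lg Ln H γ) {a b : ℝ} (hab : a ≤ b) :
    ∫ s in a..b, n s ≤ K * (b - a) := by
  have := intervalIntegral.integral_mono_on hab (D.intInt a b)
    (continuous_const.intervalIntegrable a b) (fun s _ => D.n_le s)
  rwa [intervalIntegral.integral_const, smul_eq_mul, mul_comm] at this

lemma jump_mono_bdd (D : SchemeData g n T K Lg Ln H γ) {t : ℝ} (ht : 0 ≤ t) (m : ℕ) :
    Monotone (jumpCDF g n t m) ∧ ∀ x, 0 ≤ jumpCDF g n t m x ∧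
      jumpCDF g n t m x ≤ (∫ s in (0:ℝ)..t, n s) ^ m := by
  induction m with
  | zero =>
    refine ⟨fun x y hxy => ?_, fun x => ?_⟩
    · simp only [jumpCDF]
      split_ifs <;> linarith
    · simp only [jumpCDF, pow_zero]
      split_ifs <;> norm_num
  | succ m ih =>
    obtain ⟨hm, hb⟩ := ih
    have habs : ∀ x, |jumpCDF g n t m x| ≤ (∫ s in (0:ℝ)..t, n s) ^ m := fun x => by
      rw [abs_of_nonneg (hb x).1]; exact (hb x).2
    refine ⟨fun x y hxy => ?_, fun x => ⟨?_, ?_⟩⟩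
    · simp only [jumpCDF]
      refine intervalIntegral.integral_mono_on ht (D.intInt_mul hm.measurable habs x 0 t)
        (D.intInt_mul hm.measurable habs y 0 t) fun s _ => ?_
      exact mul_le_mul_of_nonneg_left (hm (by linarith)) (D.n_nonneg s)
    · simp only [jumpCDF]
      exact intervalIntegral.integral_nonneg ht fun s _ => mul_nonneg (D.n_nonneg s) (hb _).1
    · rw [pow_succ, mul_comm]
      simp only [jumpCDF]
      exact (le_abs_self _).trans (D.abs_int_le ht fun s _ => habs _)

lemma jump_meas (D : SchemeData g n T K Lg Ln H γ) {t : ℝ} (ht : 0 ≤ t) (m : ℕ) :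
    Measurable (jumpCDF g n t m) := (D.jump_mono_bdd ht m).1.measurable

lemma jump_nonneg (D : SchemeData g n T K Lg Ln H γ) {t : ℝ} (ht : 0 ≤ t) (m : ℕ) (x : ℝ) :
    0 ≤ jumpCDF g n t m x := ((D.jump_mono_bdd ht m).2 x).1

lemma jump_abs_le (D : SchemeData g n T K Lg Ln H γ) {t : ℝ} (ht : 0 ≤ t) (m : ℕ) (x : ℝ) :
    |jumpCDF g n t m x| ≤ (∫ s in (0:ℝ)..t, n s) ^ m := by
  rw [abs_of_nonneg (D.jump_nonneg ht m x)]; exact ((D.jump_mono_bdd ht m).2 x).2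

/-- The constant `K T + 1` bounds the total mass of `n` on `[0,T]` and is at least `1`, so that its
powers are increasing. -/
lemma mass_le (D : SchemeData g n T K Lg Ln H γ) {t : ℝ} (ht : 0 ≤ t) (htT : t ≤ T) :
    ∫ s in (0:ℝ)..t, n s ≤ K * T + 1 := by
  have := D.int_le ht
  nlinarith [D.K_nonneg, mul_le_mul_of_nonneg_left htT D.K_nonneg]

lemma jump_abs_le' (D : SchemeData g n T K Lg Ln H γ) {t : ℝ} (ht : 0 ≤ t) (htT : t ≤ T)
    (m : ℕ) (x : ℝ) : |jumpCDF g n t m x| ≤ (K * T + 1) ^ m :=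
  (D.jump_abs_le ht m x).trans (pow_le_pow_left₀ (D.int_nonneg ht) (D.mass_le ht htT) m)

lemma jump_intInt (D : SchemeData g n T K Lg Ln H γ) {t : ℝ} (ht : 0 ≤ t) (m : ℕ) (x a b : ℝ) :
    IntervalIntegrable (fun s => n s * jumpCDF g n t m (x - g s)) volume a b :=
  D.intInt_mul (D.jump_meas ht m) (D.jump_abs_le ht m) x a b

lemma jump_neg (D : SchemeData g n T K Lg Ln H γ) (t : ℝ) (m : ℕ) {x : ℝ} (hx : x < 0) :
    jumpCDF g n t m x = 0 := by
  induction m generalizing x with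
  | zero => simp [jumpCDF, hx]
  | succ m ih =>
    simp only [jumpCDF]
    have : ∀ s, jumpCDF g n t m (x - g s) = 0 := fun s => ih (by linarith [D.g_nonneg s])
    simp [this]

/-- The multiple integral of the compound-Poisson series equals the iterated integral. -/
lemma pi_integral_eq (D : SchemeData g n T K Lg Ln H γ) {t : ℝ} (ht : 0 ≤ t) (m : ℕ) (x : ℝ) :
    ∫ s in Set.univ.pi (fun _ : Fin m => Set.Ioo (0:ℝ) t),
        Set.indicator {p : Fin m → ℝ | ∑ i, g (p i) ≤ x} (fun p => ∏ i, n (p i)) s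
      = jumpCDF g n t m x := by
  induction m generalizing x with
  | zero =>
    rw [volume_pi, Measure.restrict_pi_pi, Measure.pi_of_empty]
    simp [jumpCDF, Set.indicator_apply]
  | succ m ih =>
    simp only [jumpCDF]
    rw [volume_pi, Measure.restrict_pi_pi]
    -- Split off the first coordinate, which becomes the outermost integration variable.
    have hmp := (measurePreserving_piFinSuccAbove
      (fun _ : Fin (m + 1) => (volume : Measure ℝ).restrict (Set.Ioo 0 t)) 0).symm
    rw [← hmp.integral_comp (MeasurableEquiv.measurableEmbedding _)]
    have hmeas : Measurable (fun p : Fin (m + 1) → ℝ =>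
        Set.indicator {p : Fin (m + 1) → ℝ | ∑ i, g (p i) ≤ x} (fun p => ∏ i, n (p i)) p) := by
      refine Measurable.indicator ?_ ?_
      · exact Finset.measurable_prod _ fun i _ => D.n_cont.measurable.comp (measurable_pi_apply i)
      · refine measurableSet_le ?_ measurable_const
        exact Finset.measurable_sum _ fun i _ => D.g_cont.measurable.comp (measurable_pi_apply i)
    rw [integral_prod]
    · rw [intervalIntegral.integral_of_le ht, integral_Ioc_eq_integral_Ioo]
      refine integral_congr_ae (Filter.Eventually.of_forall fun s => ?_)
      simp only
      rw [← ih (x - g s), ← integral_const_mul, volume_pi, Measure.restrict_pi_pi]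
      refine integral_congr_ae (Filter.Eventually.of_forall fun p => ?_)
      simp only [MeasurableEquiv.piFinSuccAbove_symm_apply, Fin.insertNthEquiv_apply,
        Set.indicator_apply, Set.mem_ofPred_eq, Fin.sum_univ_succ, Fin.prod_univ_succ]
      simp [Fin.insertNth_zero', le_sub_iff_add_le']
    · refine Integrable.of_bound (C := K ^ (m + 1))
        (hmeas.comp (MeasurableEquiv.measurable _)).aestronglyMeasurable
        (Filter.Eventually.of_forall fun p => ?_)
      generalize (MeasurableEquiv.piFinSuccAbove (fun _ => ℝ) 0).symm p = q
      rw [Real.norm_eq_abs, Set.indicator_apply]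
      have hnn : 0 ≤ ∏ i, n (q i) := Finset.prod_nonneg fun i _ => D.n_nonneg _
      split_ifs
      · rw [abs_of_nonneg hnn]
        calc ∏ i, n (q i) ≤ ∏ _i : Fin (m + 1), K :=
              Finset.prod_le_prod (fun i _ => D.n_nonneg _) fun i _ => D.n_le _
          _ = K ^ (m + 1) := by simp
      · simpa using pow_nonneg D.K_nonneg _

/-! ### Hölder regularity in space -/

/-- One-jump part: on a level band of `g` the time spent is controlled by the Hölder bound. -/
lemma jump_one_holder (D : SchemeData g n T K Lg Ln H γ) {t : ℝ} (ht : 0 ≤ t) (htT : t ≤ T)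
    {x y : ℝ} (hxy : y ≤ x) :
    |jumpCDF g n t 1 x - jumpCDF g n t 1 y| ≤ K * H * |x - y| ^ γ := by
  simp only [jumpCDF]
  -- `S` is the level band of `g` on which the two integrands differ.
  set S : Set ℝ := {s | y < g s ∧ g s ≤ x} with hS
  have hSm : MeasurableSet S :=
    (measurableSet_lt measurable_const D.g_cont.measurable).inter
      (measurableSet_le D.g_cont.measurable measurable_const)
  have e0 := D.jump_intInt ht 0 x 0 t
  have e1 := D.jump_intInt ht 0 y 0 t
  simp only [jumpCDF] at e0 e1
  rw [← intervalIntegral.integral_sub e0 e1, intervalIntegral.integral_of_le ht,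
    integral_Ioc_eq_integral_Ioo]
  have hind : ∀ s, n s * (if 0 ≤ x - g s then (1:ℝ) else 0) -
      n s * (if 0 ≤ y - g s then (1:ℝ) else 0) = S.indicator n s := by
    intro s
    have hmem : s ∈ S ↔ y < g s ∧ g s ≤ x := Iff.rfl
    rw [Set.indicator_apply]
    simp only [sub_nonneg, hmem]
    by_cases h1 : g s ≤ y
    · simp [h1, h1.trans hxy]
    · by_cases h2 : g s ≤ x
      · simp [h1, h2, not_le.mp h1]
      · simp [h1, h2]
  simp_rw [hind]
  rw [setIntegral_indicator hSm]
  set A : Set ℝ := Set.Ioo 0 t ∩ S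
  have hdiam : Metric.ediam A ≤ ENNReal.ofReal (H * |x - y| ^ γ) := by
    refine Metric.ediam_le fun s hs u hu => ?_
    rw [edist_dist, Real.dist_eq]
    refine ENNReal.ofReal_le_ofReal ?_
    refine (D.g_inv s ⟨hs.1.1, hs.1.2.trans_le htT⟩ u ⟨hu.1.1, hu.1.2.trans_le htT⟩).trans ?_
    refine mul_le_mul_of_nonneg_left
      (Real.rpow_le_rpow (abs_nonneg _) ?_ D.γ_pos.le) D.H_nonneg
    obtain ⟨-, hs1, hs2⟩ := hs
    obtain ⟨-, hu1, hu2⟩ := hu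
    rw [abs_of_nonneg (sub_nonneg.mpr hxy), abs_le]
    constructor <;> linarith
  have hnn : 0 ≤ H * |x - y| ^ γ := mul_nonneg D.H_nonneg (Real.rpow_nonneg (abs_nonneg _) _)
  have hvol : volume A ≤ ENNReal.ofReal (H * |x - y| ^ γ) := (Real.volume_le_diam A).trans hdiam
  have hfin : volume A < ⊤ := hvol.trans_lt ENNReal.ofReal_lt_top
  have h := norm_setIntegral_le_of_norm_le_const (f := n) (C := K) hfin
    (fun s _ => by rw [Real.norm_eq_abs, abs_of_nonneg (D.n_nonneg s)]; exact D.n_le s)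
  rw [Real.norm_eq_abs] at h
  refine h.trans ?_
  rw [mul_assoc]
  refine mul_le_mul_of_nonneg_left ?_ D.K_nonneg
  exact ENNReal.toReal_le_of_le_ofReal hnn hvol

/-- Every term with at least one jump inherits the Hölder bound of the one-jump term, uniformly in
the sizes of the other jumps. -/
lemma jump_holder (D : SchemeData g n T K Lg Ln H γ) {t : ℝ} (ht : 0 ≤ t) (htT : t ≤ T)
    (m : ℕ) (x y : ℝ) :
    |jumpCDF g n t (m + 1) x - jumpCDF g n t (m + 1) y|
      ≤ (K * T + 1) ^ m * (K * H * |x - y| ^ γ) := by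
  induction m generalizing x y with
  | zero =>
    rw [pow_zero, one_mul]
    rcases le_total y x with h | h
    · exact D.jump_one_holder ht htT h
    · rw [abs_sub_comm, abs_sub_comm x y]; exact D.jump_one_holder ht htT h
  | succ m ih =>
    rw [jumpCDF, jumpCDF, ← intervalIntegral.integral_sub (D.jump_intInt ht _ _ _ _)
      (D.jump_intInt ht _ _ _ _)]
    simp_rw [← mul_sub]
    refine (D.abs_int_le (c := (K * T + 1) ^ m * (K * H * |x - y| ^ γ)) ht
      fun s _ => ?_).trans ?_
    · have := ih (x - g s) (y - g s)
      rwa [sub_sub_sub_cancel_right] at this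
    · rw [pow_succ', mul_assoc (K * T + 1)]
      refine mul_le_mul_of_nonneg_right (D.mass_le ht htT) ?_
      have := D.K_nonneg
      have := D.H_nonneg
      have := D.T_pos
      positivity

/-! ### Expansion in time -/

lemma jump_succ_split (D : SchemeData g n T K Lg Ln H γ) {t t' : ℝ} (ht : 0 ≤ t) (htt : t ≤ t')
    (m : ℕ) (x : ℝ) :
    jumpCDF g n t' (m + 1) x = (∫ s in (0:ℝ)..t, n s * jumpCDF g n t' m (x - g s)) +
      ∫ s in t..t', n s * jumpCDF g n t' m (x - g s) := by
  rw [jumpCDF, intervalIntegral.integral_add_adjacent_intervals] <;>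
  exact D.jump_intInt (ht.trans htt) _ _ _ _

lemma jump_time_diff (D : SchemeData g n T K Lg Ln H γ) {t t' : ℝ} (ht : 0 ≤ t) (htt : t ≤ t')
    (htT : t' ≤ T) (m : ℕ) (x : ℝ) :
    |jumpCDF g n t' m x - jumpCDF g n t m x| ≤ m * (∫ s in t..t', n s) * (K * T + 1) ^ m := by
  induction m generalizing x with
  | zero => simp [jumpCDF]
  | succ m ih =>
    have hB : 1 ≤ K * T + 1 := by nlinarith [mul_nonneg D.K_nonneg D.T_pos.le]
    set B := K * T + 1 with hBdef
    set a := ∫ s in t..t', n s with ha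
    have ha0 : 0 ≤ a := D.int_nonneg htt
    have hb := D.mass_le ht (htt.trans htT)
    have hb0 := D.int_nonneg ht
    rw [D.jump_succ_split ht htt]
    have e1 : jumpCDF g n t (m + 1) x = ∫ s in (0:ℝ)..t, n s * jumpCDF g n t m (x - g s) := rfl
    rw [e1, add_sub_right_comm, ← intervalIntegral.integral_sub
      (D.jump_intInt (ht.trans htt) _ _ _ _) (D.jump_intInt ht _ _ _ _)]
    simp_rw [← mul_sub]
    have h1 := D.abs_int_le (u := fun s => jumpCDF g n t' m (x - g s) - jumpCDF g n t m (x - g s))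
      (c := m * a * B ^ m) ht fun s _ => ih _
    have h2 := D.abs_int_le (u := fun s => jumpCDF g n t' m (x - g s)) (c := B ^ m) htt
      fun s _ => D.jump_abs_le' (ht.trans htt) htT m _
    refine (abs_add_le _ _).trans ((add_le_add h1 h2).trans ?_)
    have hp : 0 ≤ B ^ m := by positivity
    have h3 : (∫ s in (0:ℝ)..t, n s) * (m * a * B ^ m) ≤ B * (m * a * B ^ m) :=
      mul_le_mul_of_nonneg_right hb (by positivity)
    have h4 : a * B ^ m ≤ B * (a * B ^ m) := le_mul_of_one_le_left (by positivity) hB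
    push_cast
    rw [pow_succ]
    nlinarith

/-- A jump in `(t, t']` and a jump in `(0, t]` may be integrated out in either order. -/
lemma jump_swap (D : SchemeData g n T K Lg Ln H γ) {t t' : ℝ} (ht : 0 ≤ t) (htt : t ≤ t')
    (m : ℕ) (x : ℝ) :
    ∫ r in t..t', n r * jumpCDF g n t (m + 1) (x - g r) =
      ∫ s in (0:ℝ)..t, n s * ∫ r in t..t', n r * jumpCDF g n t m (x - g s - g r) := by
  simp only [jumpCDF]
  simp_rw [← intervalIntegral.integral_const_mul]
  rw [intervalIntegral.integral_of_le htt, intervalIntegral.integral_of_le ht]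
  simp_rw [intervalIntegral.integral_of_le htt, intervalIntegral.integral_of_le ht]
  rw [integral_integral_swap]
  · refine integral_congr_ae (Filter.Eventually.of_forall fun s => ?_)
    refine integral_congr_ae (Filter.Eventually.of_forall fun r => ?_)
    simp only
    rw [sub_right_comm]; ring
  · refine Integrable.of_bound (C := K * (K * (∫ s in (0:ℝ)..t, n s) ^ m)) ?_
      (Filter.Eventually.of_forall fun p => ?_)
    · refine Measurable.aestronglyMeasurable ?_
      have h1 := D.n_cont.measurable
      have h2 := D.g_cont.measurable
      have h3 := D.jump_meas ht m
      simp only [Function.uncurry_def]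
      fun_prop
    · simp only [Function.uncurry_def]
      rw [norm_mul, norm_mul, Real.norm_of_nonneg (D.n_nonneg _),
        Real.norm_of_nonneg (D.n_nonneg _)]
      have h := D.jump_abs_le ht m (x - g p.1 - g p.2)
      have := D.K_nonneg
      exact mul_le_mul (D.n_le _) (mul_le_mul (D.n_le _) h (norm_nonneg _) D.K_nonneg)
        (mul_nonneg (D.n_nonneg _) (norm_nonneg _)) D.K_nonneg

/-- First-order expansion in time: up to a quadratic remainder, the increment of the `(m+1)`-jump
term comes from exactly one jump in the interval `(t, t']`, which can be any of the `m + 1` jumps. -/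
lemma jump_expansion (D : SchemeData g n T K Lg Ln H γ) {t t' : ℝ} (ht : 0 ≤ t) (htt : t ≤ t')
    (htT : t' ≤ T) (m : ℕ) (x : ℝ) :
    |jumpCDF g n t' (m + 1) x - jumpCDF g n t (m + 1) x -
        (m + 1) * ∫ s in t..t', n s * jumpCDF g n t m (x - g s)|
      ≤ (m + 1) * m * (∫ s in t..t', n s) ^ 2 * (K * T + 1) ^ (m + 1) := by
  induction m generalizing x with
  | zero =>
    rw [D.jump_succ_split ht htt]
    simp [jumpCDF]
  | succ m ih =>
    have hB : 1 ≤ K * T + 1 := by nlinarith [mul_nonneg D.K_nonneg D.T_pos.le]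
    have htd := D.jump_time_diff ht htt htT (m + 1)
    set B := K * T + 1 with hBdef
    set a := ∫ s in t..t', n s with ha
    have ha0 : 0 ≤ a := D.int_nonneg htt
    have hb := D.mass_le ht (htt.trans htT)
    have hb0 := D.int_nonneg ht
    set J : ℝ → ℝ := fun y => ∫ r in t..t', n r * jumpCDF g n t m (y - g r) with hJ
    have hJmono : Monotone J := fun y z hyz => by
      refine intervalIntegral.integral_mono_on htt (D.jump_intInt ht _ _ _ _)
        (D.jump_intInt ht _ _ _ _) fun s _ => ?_
      exact mul_le_mul_of_nonneg_left ((D.jump_mono_bdd ht m).1 (by linarith)) (D.n_nonneg s)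
    have hJint := D.intInt_mul hJmono.measurable
      (fun y => D.abs_int_le htt fun s _ => D.jump_abs_le ht m _) x 0 t
    have e1 : jumpCDF g n t (m + 1 + 1) x
      = ∫ s in (0:ℝ)..t, n s * jumpCDF g n t (m + 1) (x - g s) := rfl
    have hs := D.jump_swap ht htt m x
    -- The outermost jump lies in `(0,t]` (where the induction hypothesis applies, with `J` the
    -- contribution of a later jump) or in `(t,t']`; `jump_swap` identifies the two main terms.
    have key : jumpCDF g n t' (m + 1 + 1) x - jumpCDF g n t (m + 1 + 1) x -
        ((m + 1 : ℕ) + 1) * ∫ s in t..t', n s * jumpCDF g n t (m + 1) (x - g s) =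
        (∫ s in (0:ℝ)..t, n s * (jumpCDF g n t' (m + 1) (x - g s)
          - jumpCDF g n t (m + 1) (x - g s) - (m + 1) * J (x - g s))) +
        ∫ s in t..t', n s * (jumpCDF g n t' (m + 1) (x - g s)
          - jumpCDF g n t (m + 1) (x - g s)) := by
      simp_rw [mul_sub]
      rw [intervalIntegral.integral_sub ((D.jump_intInt (ht.trans htt) _ _ _ _).sub
        (D.jump_intInt ht _ _ _ _)) (by
          simp_rw [mul_left_comm (n _)]; exact hJint.const_mul _),
        intervalIntegral.integral_sub (D.jump_intInt (ht.trans htt) _ _ _ _)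
          (D.jump_intInt ht _ _ _ _),
        intervalIntegral.integral_sub (D.jump_intInt (ht.trans htt) _ _ _ _)
          (D.jump_intInt ht _ _ _ _)]
      simp_rw [mul_left_comm (n _) ((m : ℝ) + 1)]
      rw [intervalIntegral.integral_const_mul, ← hs, D.jump_succ_split ht htt, e1]
      push_cast
      ring
    rw [key]
    have h1 := D.abs_int_le (u := fun s => jumpCDF g n t' (m + 1) (x - g s)
          - jumpCDF g n t (m + 1) (x - g s) - (m + 1) * J (x - g s))
      (c := (m + 1) * m * a ^ 2 * B ^ (m + 1)) ht fun s _ => ih _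
    have h2 := D.abs_int_le (u := fun s => jumpCDF g n t' (m + 1) (x - g s)
          - jumpCDF g n t (m + 1) (x - g s)) htt fun s _ => htd (x - g s)
    refine (abs_add_le _ _).trans ((add_le_add h1 h2).trans ?_)
    have h3 := mul_le_mul_of_nonneg_right hb
      (show 0 ≤ (m + 1) * m * a ^ 2 * B ^ (m + 1) by positivity)
    have hp : 0 ≤ (m + 1) * a ^ 2 * B ^ (m + 1) := by positivity
    have h4 := le_mul_of_one_le_left hp hB
    push_cast
    rw [← ha, pow_succ B (m + 1)]
    nlinarith

end SchemeData

/-! ### The unnormalised distribution function -/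

/-- The unnormalised distribution function `e^{Λ(t)} F(x,t)`. -/
noncomputable def jumpSum (g n : ℝ → ℝ) (t x : ℝ) : ℝ :=
  ∑' m : ℕ, ((m.factorial : ℝ))⁻¹ * jumpCDF g n t m x

namespace SchemeData

variable {g n : ℝ → ℝ} {T K Lg Ln H γ : ℝ}

lemma poissonCDF_eq (D : SchemeData g n T K Lg Ln H γ) {t : ℝ} (ht : 0 ≤ t) (x : ℝ) :
    poissonCDF g n x t = Real.exp (-(∫ s in (0:ℝ)..t, n s)) * jumpSum g n t x := by
  unfold poissonCDF jumpSum
  simp_rw [D.pi_integral_eq ht]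

lemma hasSum_exp (b : ℝ) : HasSum (fun m : ℕ => ((m.factorial : ℝ))⁻¹ * b ^ m) (Real.exp b) := by
  have := NormedSpace.expSeries_div_hasSum_exp b
  rw [← Real.exp_eq_exp_ℝ] at this
  simpa only [div_eq_inv_mul] using this

lemma term_le (D : SchemeData g n T K Lg Ln H γ) {t : ℝ} (ht : 0 ≤ t) (m : ℕ) (x : ℝ) :
    ‖((m.factorial : ℝ))⁻¹ * jumpCDF g n t m x‖
      ≤ ((m.factorial : ℝ))⁻¹ * (∫ s in (0:ℝ)..t, n s) ^ m := by
  rw [norm_mul, Real.norm_of_nonneg (by positivity)]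
  exact mul_le_mul_of_nonneg_left (D.jump_abs_le ht m x) (by positivity)

lemma jump_hasSum (D : SchemeData g n T K Lg Ln H γ) {t : ℝ} (ht : 0 ≤ t) (x : ℝ) :
    HasSum (fun m : ℕ => ((m.factorial : ℝ))⁻¹ * jumpCDF g n t m x) (jumpSum g n t x) :=
  (Summable.of_norm_bounded (hasSum_exp _).summable fun m => D.term_le ht m x).hasSum

lemma jump_hasSum_succ (D : SchemeData g n T K Lg Ln H γ) {t : ℝ} (ht : 0 ≤ t) (x : ℝ) :
    HasSum (fun m : ℕ => (((m + 1).factorial : ℝ))⁻¹ * jumpCDF g n t (m + 1) x)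
      (jumpSum g n t x - jumpCDF g n t 0 x) := by
  rw [hasSum_nat_add_iff (f := fun m : ℕ => ((m.factorial : ℝ))⁻¹ * jumpCDF g n t m x) 1]
  simpa using D.jump_hasSum ht x

lemma jumpSum_nonneg (D : SchemeData g n T K Lg Ln H γ) {t : ℝ} (ht : 0 ≤ t) (x : ℝ) :
    0 ≤ jumpSum g n t x :=
  tsum_nonneg fun m => mul_nonneg (by positivity) (D.jump_nonneg ht m x)

lemma jumpSum_le (D : SchemeData g n T K Lg Ln H γ) {t : ℝ} (ht : 0 ≤ t) (x : ℝ) :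
    jumpSum g n t x ≤ Real.exp (∫ s in (0:ℝ)..t, n s) :=
  (le_abs_self _).trans (tsum_of_norm_bounded (hasSum_exp _) fun m => D.term_le ht m x)

lemma jumpSum_neg (D : SchemeData g n T K Lg Ln H γ) (t : ℝ) {x : ℝ} (hx : x < 0) :
    jumpSum g n t x = 0 := by
  unfold jumpSum
  simp [D.jump_neg t _ hx]

lemma one_le_B (D : SchemeData g n T K Lg Ln H γ) : 1 ≤ K * T + 1 := by
  nlinarith [mul_nonneg D.K_nonneg D.T_pos.le]

/-- Once the zero-jump term, which carries the atom at `0`, is removed, the unnormalised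
distribution function is `γ`-Hölder in `x`. -/
lemma jumpSum_holder (D : SchemeData g n T K Lg Ln H γ) {t : ℝ} (ht : 0 ≤ t) (htT : t ≤ T)
    (x y : ℝ) :
    |jumpSum g n t x - jumpSum g n t y - (jumpCDF g n t 0 x - jumpCDF g n t 0 y)|
      ≤ Real.exp (K * T + 1) * (K * H * |x - y| ^ γ) := by
  have h := (D.jump_hasSum_succ ht x).sub (D.jump_hasSum_succ ht y)
  have hB := (hasSum_exp (K * T + 1)).mul_right (K * H * |x - y| ^ γ)
  rw [show jumpSum g n t x - jumpSum g n t y - (jumpCDF g n t 0 x - jumpCDF g n t 0 y) =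
    jumpSum g n t x - jumpCDF g n t 0 x - (jumpSum g n t y - jumpCDF g n t 0 y) by ring,
    ← Real.norm_eq_abs]
  refine h.norm_le_of_bounded hB fun m => ?_
  rw [← mul_sub, norm_mul, Real.norm_of_nonneg (by positivity), mul_assoc]
  have hnn : 0 ≤ K * H * |x - y| ^ γ :=
    mul_nonneg (mul_nonneg D.K_nonneg D.H_nonneg) (Real.rpow_nonneg (abs_nonneg _) _)
  refine mul_le_mul ?_ (D.jump_holder ht htT m x y) (norm_nonneg _) (by positivity)
  gcongr
  omega

lemma mass_lin (D : SchemeData g n T K Lg Ln H γ) (t : ℝ) {h : ℝ} (hh : 0 ≤ h) :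
    |(∫ s in t..t + h, n s) - h * n t| ≤ Ln * h ^ 2 := by
  have e : (∫ s in t..t + h, n s) - h * n t = ∫ s in t..t + h, (n s - n t) := by
    rw [intervalIntegral.integral_sub (D.intInt _ _) (by simp)]
    simp
  rw [e, ← Real.norm_eq_abs]
  have := intervalIntegral.norm_integral_le_of_norm_le_const (a := t) (b := t + h)
    (f := fun s => n s - n t) (C := Ln * h) fun s hs => by
      rw [Set.uIoc_of_le (by linarith)] at hs
      refine (D.n_lip s t).trans (mul_le_mul_of_nonneg_left ?_ D.Ln_nonneg)
      rw [abs_of_nonneg (by linarith [hs.1])]; linarith [hs.2]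
  refine this.trans (le_of_eq ?_)
  rw [add_sub_cancel_left, abs_of_nonneg hh]; ring

/-- Freezing the jump size `g(s)` at the left end of a time step. The additional term for `m = 0`
accounts for the values of `x` which the atom, shifted by one jump, crosses during the step. -/
lemma jump_freeze (D : SchemeData g n T K Lg Ln H γ) {t h : ℝ} (ht : 0 ≤ t) (hh : 0 ≤ h)
    (htT : t + h ≤ T) (m : ℕ) (x : ℝ) :
    |(∫ s in t..t + h, n s * jumpCDF g n t m (x - g s)) - h * n t * jumpCDF g n t m (x - g t)|
      ≤ (K * T + 1) ^ m * (Ln * h ^ 2 + h * K * (K * H * (Lg * h) ^ γ)) +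
        if m = 0 then h * K * (if g t ≤ x ∧ x < g (t + h) then 1 else 0) else 0 := by
  have hB := D.one_le_B
  have hK := D.K_nonneg
  have hH := D.H_nonneg
  have hLg := D.Lg_nonneg
  have hLn := D.Ln_nonneg
  set B := K * T + 1 with hBdef
  have htt : t ≤ t + h := by linarith
  -- `c` bounds the integrand difference pointwise; it is Hölder-small unless `m = 0`.
  set c : ℝ := B ^ m * (K * H * (Lg * h) ^ γ) +
    if m = 0 then (if g t ≤ x ∧ x < g (t + h) then 1 else 0) else 0 with hc
  have hc0 : 0 ≤ c := by
    refine add_nonneg (by positivity) ?_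
    split_ifs <;> norm_num
  have hpt : ∀ s ∈ Set.Ioc t (t + h),
      |jumpCDF g n t m (x - g s) - jumpCDF g n t m (x - g t)| ≤ c := by
    intro s hs
    have hs1 := D.g_mono hs.1.le
    have hs2 := D.g_mono hs.2
    cases m with
    | zero =>
      have h0 : 0 ≤ B ^ 0 * (K * H * (Lg * h) ^ γ) := by positivity
      simp only [jumpCDF, hc, if_true]
      by_cases h1 : 0 ≤ x - g s
      · rw [if_pos h1, if_pos (by linarith), sub_self, abs_zero]
        exact add_nonneg h0 (by split_ifs <;> norm_num)
      · by_cases h2 : 0 ≤ x - g t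
        · rw [if_neg h1, if_pos h2, if_pos ⟨by linarith, by linarith⟩]
          norm_num at h0 ⊢
          exact h0
        · rw [if_neg h1, if_neg h2, sub_self, abs_zero]
          exact add_nonneg h0 (by split_ifs <;> norm_num)
    | succ j =>
      have h1 := D.jump_holder ht (htt.trans htT) j (x - g s) (x - g t)
      rw [sub_sub_sub_cancel_left] at h1
      simp only [hc, Nat.succ_ne_zero, if_false, add_zero]
      refine h1.trans ?_
      have h2 : |g t - g s| ≤ Lg * h := by
        refine (D.g_lip t s).trans (mul_le_mul_of_nonneg_left ?_ hLg)
        rw [abs_sub_comm, abs_of_nonneg (by linarith [hs.1])]; linarith [hs.2]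
      have h3 := Real.rpow_le_rpow (abs_nonneg _) h2 D.γ_pos.le
      have h4 : B ^ j ≤ B ^ (j + 1) := pow_le_pow_right₀ hB (by omega)
      have h5 : 0 ≤ |g t - g s| ^ γ := Real.rpow_nonneg (abs_nonneg _) _
      gcongr
  have e : (∫ s in t..t + h, n s * jumpCDF g n t m (x - g s)) -
      h * n t * jumpCDF g n t m (x - g t) =
      (∫ s in t..t + h, n s * (jumpCDF g n t m (x - g s) - jumpCDF g n t m (x - g t))) +
      ((∫ s in t..t + h, n s) - h * n t) * jumpCDF g n t m (x - g t) := by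
    simp_rw [mul_sub]
    rw [intervalIntegral.integral_sub (D.jump_intInt ht _ _ _ _) ((D.intInt _ _).mul_const _),
      intervalIntegral.integral_mul_const]
    ring
  rw [e]
  refine (abs_add_le _ _).trans ?_
  have i1 := D.abs_int_le htt hpt
  have i2 : (∫ s in t..t + h, n s) * c ≤ K * h * c := by
    have := D.int_le htt
    rw [add_sub_cancel_left] at this
    exact mul_le_mul_of_nonneg_right this hc0
  have i3 : |((∫ s in t..t + h, n s) - h * n t) * jumpCDF g n t m (x - g t)|
      ≤ Ln * h ^ 2 * B ^ m := by
    rw [abs_mul]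
    exact mul_le_mul (D.mass_lin t hh) (D.jump_abs_le' ht (htt.trans htT) m _) (abs_nonneg _)
      (by positivity)
  refine (add_le_add (i1.trans i2) i3).trans (le_of_eq ?_)
  rw [hc]
  split_ifs <;> ring

/-- One-step consistency of the unnormalised distribution function with the forward equation:
term `m + 1` at the new time is matched with term `m` at the old one. -/
lemma jumpSum_step (D : SchemeData g n T K Lg Ln H γ) {t h : ℝ} (ht : 0 ≤ t) (hh : 0 ≤ h)
    (htT : t + h ≤ T) (x : ℝ) :
    |jumpSum g n (t + h) x - jumpSum g n t x - h * n t * jumpSum g n t (x - g t)|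
      ≤ Real.exp (2 * (K * T + 1)) *
          ((K * T + 1) * (K * h) ^ 2 + (Ln * h ^ 2 + h * K * (K * H * (Lg * h) ^ γ))) +
        h * K * (if g t ≤ x ∧ x < g (t + h) then 1 else 0) := by
  have hB := D.one_le_B
  have hK := D.K_nonneg
  have hH := D.H_nonneg
  have hLg := D.Lg_nonneg
  have hLn := D.Ln_nonneg
  set B := K * T + 1 with hBdef
  have htt : t ≤ t + h := by linarith
  set E₁ := Ln * h ^ 2 + h * K * (K * H * (Lg * h) ^ γ) with hE₁
  have hE₁0 : 0 ≤ E₁ := by positivity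
  have hs := ((D.jump_hasSum_succ (ht.trans htt) x).sub (D.jump_hasSum_succ ht x)).sub
    ((D.jump_hasSum ht (x - g t)).mul_left (h * n t))
  have hb := ((hasSum_exp (2 * B)).mul_right (B * (K * h) ^ 2 + E₁)).add
    (hasSum_ite_eq (0 : ℕ) (h * K * (if g t ≤ x ∧ x < g (t + h) then (1:ℝ) else 0)))
  rw [show jumpSum g n (t + h) x - jumpSum g n t x - h * n t * jumpSum g n t (x - g t) =
    jumpSum g n (t + h) x - jumpCDF g n (t + h) 0 x - (jumpSum g n t x - jumpCDF g n t 0 x)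
      - h * n t * jumpSum g n t (x - g t) by simp only [jumpCDF]; ring, ← Real.norm_eq_abs]
  refine hs.norm_le_of_bounded hb fun m => ?_
  have hfr := D.jump_freeze ht hh htT m x
  have hex := D.jump_expansion ht htt htT m x
  rw [← hBdef] at hfr hex
  rw [← hE₁] at hfr
  have hmass : (∫ s in t..t + h, n s) ^ 2 ≤ (K * h) ^ 2 := by
    have := D.int_le htt
    rw [add_sub_cancel_left] at this
    exact pow_le_pow_left₀ (D.int_nonneg htt) this 2
  set I := ∫ s in t..t + h, n s * jumpCDF g n t m (x - g s) with hI
  set χ : ℝ := h * K * (if g t ≤ x ∧ x < g (t + h) then (1:ℝ) else 0) with hχ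
  have hf : (0:ℝ) < m.factorial := by positivity
  have e : (((m + 1).factorial : ℝ))⁻¹ * jumpCDF g n (t + h) (m + 1) x -
      (((m + 1).factorial : ℝ))⁻¹ * jumpCDF g n t (m + 1) x -
      h * n t * (((m.factorial : ℝ))⁻¹ * jumpCDF g n t m (x - g t)) =
      ((m.factorial : ℝ))⁻¹ * (((m:ℝ) + 1)⁻¹ * (jumpCDF g n (t + h) (m + 1) x
        - jumpCDF g n t (m + 1) x - (m + 1) * I)
        + (I - h * n t * jumpCDF g n t m (x - g t))) := by
    rw [Nat.factorial_succ]
    push_cast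
    field_simp
    ring
  rw [e, norm_mul, Real.norm_of_nonneg (by positivity)]
  -- The factor `m` of `jump_expansion` is absorbed in `2 ^ m`, whence `exp (2 B)` after summation.
  have hm : (m : ℝ) ≤ 2 ^ m := by exact_mod_cast (Nat.lt_two_pow_self).le
  have hm1 : (1 : ℝ) ≤ 2 ^ m := one_le_pow₀ (by norm_num)
  have h1 : ‖((m:ℝ) + 1)⁻¹ * (jumpCDF g n (t + h) (m + 1) x
        - jumpCDF g n t (m + 1) x - (m + 1) * I)‖ ≤ (2 * B) ^ m * (B * (K * h) ^ 2) := by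
    rw [norm_mul, Real.norm_of_nonneg (by positivity), Real.norm_eq_abs,
      inv_mul_le_iff₀ (by positivity)]
    refine hex.trans ?_
    calc ((m:ℝ) + 1) * m * (∫ s in t..t + h, n s) ^ 2 * B ^ (m + 1)
        ≤ ((m:ℝ) + 1) * 2 ^ m * (K * h) ^ 2 * B ^ (m + 1) := by gcongr
      _ = _ := by rw [mul_pow]; ring_nf
  have h2 : B ^ m * E₁ ≤ (2 * B) ^ m * E₁ := by
    refine mul_le_mul_of_nonneg_right ?_ hE₁0
    exact pow_le_pow_left₀ (by linarith) (by linarith) m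
  have h3 : ((m.factorial : ℝ))⁻¹ * (if m = 0 then χ else 0) = if m = 0 then χ else 0 := by
    split_ifs with h0
    · simp [h0]
    · simp
  calc ((m.factorial : ℝ))⁻¹ * ‖((m:ℝ) + 1)⁻¹ * (jumpCDF g n (t + h) (m + 1) x
        - jumpCDF g n t (m + 1) x - (m + 1) * I) + (I - h * n t * jumpCDF g n t m (x - g t))‖
      ≤ ((m.factorial : ℝ))⁻¹ * ((2 * B) ^ m * (B * (K * h) ^ 2) + ((2 * B) ^ m * E₁ +
          if m = 0 then χ else 0)) := by
        refine mul_le_mul_of_nonneg_left ((norm_add_le _ _).trans (add_le_add h1 ?_))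
          (by positivity)
        rw [Real.norm_eq_abs]
        linarith
    _ = _ := by
        rw [mul_add _ ((2 * B) ^ m * (B * (K * h) ^ 2)), mul_add _ ((2 * B) ^ m * E₁), h3]; ring

/-! ### Truncation errors of the distribution function -/

lemma poissonCDF_bounds (D : SchemeData g n T K Lg Ln H γ) {t : ℝ} (ht : 0 ≤ t) (x : ℝ) :
    0 ≤ poissonCDF g n x t ∧ poissonCDF g n x t ≤ 1 := by
  rw [D.poissonCDF_eq ht]
  refine ⟨mul_nonneg (Real.exp_pos _).le (D.jumpSum_nonneg ht x), ?_⟩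
  have := mul_le_mul_of_nonneg_left (D.jumpSum_le ht x)
    (Real.exp_pos (-(∫ s in (0:ℝ)..t, n s))).le
  rwa [← Real.exp_add, neg_add_cancel, Real.exp_zero] at this

lemma poissonCDF_neg (D : SchemeData g n T K Lg Ln H γ) {t : ℝ} (ht : 0 ≤ t) {x : ℝ}
    (hx : x < 0) : poissonCDF g n x t = 0 := by
  rw [D.poissonCDF_eq ht, D.jumpSum_neg t hx, mul_zero]

/-- Local truncation error in time of the forward Euler step for the Kolmogorov–Feller
equation. -/
lemma poissonCDF_step (D : SchemeData g n T K Lg Ln H γ) {t h : ℝ} (ht : 0 ≤ t) (hh : 0 ≤ h)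
    (htT : t + h ≤ T) (x : ℝ) :
    |poissonCDF g n x (t + h) - (1 - h * n t) * poissonCDF g n x t
        - h * n t * poissonCDF g n (x - g t) t|
      ≤ Real.exp (2 * (K * T + 1)) *
          ((K * T + 1) * (K * h) ^ 2 + (Ln * h ^ 2 + h * K * (K * H * (Lg * h) ^ γ))) +
        h * K * (if g t ≤ x ∧ x < g (t + h) then 1 else 0) + (2 * K ^ 2 + Ln) * h ^ 2 := by
  have hK := D.K_nonneg
  have htt : t ≤ t + h := by linarith
  have hr := D.jumpSum_step ht hh htT x
  have hF := D.poissonCDF_bounds ht x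
  have hFg := D.poissonCDF_bounds ht (x - g t)
  have hlin := D.mass_lin t hh
  have ha0 := D.int_nonneg htt
  have haK := D.int_le htt
  rw [add_sub_cancel_left] at haK
  have hΛ' := D.int_nonneg (ht.trans htt)
  rw [D.poissonCDF_eq ht] at hF hFg
  rw [D.poissonCDF_eq ht, D.poissonCDF_eq ht, D.poissonCDF_eq (ht.trans htt)]
  have hsplit := intervalIntegral.integral_add_adjacent_intervals (D.intInt 0 t)
    (D.intInt t (t + h))
  have hn0 := D.n_nonneg t
  have hnK := D.n_le t
  set ν := n t
  set a := ∫ s in t..t + h, n s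
  set b := ∫ s in (0:ℝ)..t, n s
  rw [← hsplit] at hΛ' ⊢
  set S' := jumpSum g n (t + h) x
  set S := jumpSum g n t x
  set Sg := jumpSum g n t (x - g t)
  set R := Real.exp (2 * (K * T + 1)) *
          ((K * T + 1) * (K * h) ^ 2 + (Ln * h ^ 2 + h * K * (K * H * (Lg * h) ^ γ))) +
        h * K * (if g t ≤ x ∧ x < g (t + h) then 1 else 0)
  have hexp : Real.exp (-(b + a)) = Real.exp (-b) * Real.exp (-a) := by
    rw [← Real.exp_add]; ring_nf
  have hE1 : 1 - a ≤ Real.exp (-a) := by linarith [Real.add_one_le_exp (-a)]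
  have hE2 : Real.exp (-a) ≤ 1 - a + a ^ 2 := by
    have h1 : Real.exp (-a) * Real.exp a = 1 := by rw [← Real.exp_add]; simp
    have h2 := mul_le_mul_of_nonneg_left (Real.add_one_le_exp a) (Real.exp_pos (-a)).le
    have h3 : (0:ℝ) < a + 1 := by linarith
    refine le_of_mul_le_mul_right (a := a + 1) ?_ h3
    nlinarith [pow_nonneg ha0 3]
  have hE3 : Real.exp (-a) ≤ 1 := Real.exp_le_one_iff.mpr (by linarith)
  have ha2 : a ^ 2 ≤ (K * h) ^ 2 := pow_le_pow_left₀ ha0 haK 2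
  -- `1 - h ν` agrees with `exp (-a)`, the probability of no jump during the step, to first order.
  have key : Real.exp (-(b + a)) * S' - (1 - h * ν) * (Real.exp (-b) * S)
      - h * ν * (Real.exp (-b) * Sg) =
      (Real.exp (-a) - 1 + h * ν) * (Real.exp (-b) * S) +
      h * ν * (Real.exp (-a) - 1) * (Real.exp (-b) * Sg) +
      Real.exp (-(b + a)) * (S' - S - h * ν * Sg) := by
    rw [hexp]; ring
  rw [key]
  obtain ⟨l1, l2⟩ := abs_le.mp hlin
  have k1 : |(Real.exp (-a) - 1 + h * ν) * (Real.exp (-b) * S)| ≤ (K * h) ^ 2 + Ln * h ^ 2 := by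
    rw [abs_mul, abs_of_nonneg hF.1]
    refine (mul_le_of_le_one_right (abs_nonneg _) hF.2).trans ?_
    rw [abs_le]
    constructor <;> nlinarith
  have k2 : |h * ν * (Real.exp (-a) - 1) * (Real.exp (-b) * Sg)| ≤ (K * h) ^ 2 := by
    rw [abs_mul, abs_of_nonneg hFg.1]
    refine (mul_le_of_le_one_right (abs_nonneg _) hFg.2).trans ?_
    rw [abs_mul, abs_of_nonneg (mul_nonneg hh hn0), pow_two]
    refine mul_le_mul (by nlinarith) ?_ (abs_nonneg _) (by positivity)
    rw [abs_le]; constructor <;> linarith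
  have k3 : |Real.exp (-(b + a)) * (S' - S - h * ν * Sg)| ≤ R := by
    rw [abs_mul, abs_of_pos (Real.exp_pos _)]
    exact (mul_le_of_le_one_left (abs_nonneg _)
      (Real.exp_le_one_iff.mpr (by linarith))).trans hr
  refine (abs_add_le _ _).trans ((add_le_add ((abs_add_le _ _).trans (add_le_add k1 k2)) k3).trans
    (le_of_eq ?_))
  ring

/-- Linear interpolation error on a grid cell; it is only `O(1)` on the cell that contains the
atom at `0`. -/
lemma poissonCDF_interp (D : SchemeData g n T K Lg Ln H γ) {t : ℝ} (ht : 0 ≤ t) (htT : t ≤ T)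
    {δ l z : ℝ} (hδ : 0 ≤ δ) (hl0 : 0 ≤ l) (hl1 : l ≤ 1) :
    |poissonCDF g n (z + l * δ) t - ((1 - l) * poissonCDF g n z t + l * poissonCDF g n (z + δ) t)|
      ≤ Real.exp (K * T + 1) * (K * H * δ ^ γ) + if 0 ≤ z + δ ∧ z < 0 then 1 else 0 := by
  have hK := D.K_nonneg
  have hH := D.H_nonneg
  have h1 := D.jumpSum_holder ht htT (z + l * δ) z
  have h2 := D.jumpSum_holder ht htT (z + l * δ) (z + δ)
  have hlδ : l * δ ≤ δ := mul_le_of_le_one_left hδ hl1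
  have hlδ0 : 0 ≤ l * δ := mul_nonneg hl0 hδ
  set Q := Real.exp (K * T + 1) * (K * H * δ ^ γ) with hQ
  have m1 : |z + l * δ - z| ^ γ ≤ δ ^ γ := by
    refine Real.rpow_le_rpow (abs_nonneg _) ?_ D.γ_pos.le
    rw [abs_le]; constructor <;> linarith
  have m2 : |z + l * δ - (z + δ)| ^ γ ≤ δ ^ γ := by
    refine Real.rpow_le_rpow (abs_nonneg _) ?_ D.γ_pos.le
    rw [abs_le]; constructor <;> linarith
  replace h1 := h1.trans (show _ ≤ Q by rw [hQ]; gcongr)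
  replace h2 := h2.trans (show _ ≤ Q by rw [hQ]; gcongr)
  rw [D.poissonCDF_eq ht, D.poissonCDF_eq ht, D.poissonCDF_eq ht]
  set E := Real.exp (-(∫ s in (0:ℝ)..t, n s))
  have hE0 : 0 ≤ E := (Real.exp_pos _).le
  have hE1 : E ≤ 1 := Real.exp_le_one_iff.mpr (by linarith [D.int_nonneg ht])
  have key : E * jumpSum g n t (z + l * δ) - ((1 - l) * (E * jumpSum g n t z)
        + l * (E * jumpSum g n t (z + δ))) =
      E * (((1 - l) * (jumpSum g n t (z + l * δ) - jumpSum g n t z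
          - (jumpCDF g n t 0 (z + l * δ) - jumpCDF g n t 0 z)) +
        l * (jumpSum g n t (z + l * δ) - jumpSum g n t (z + δ)
          - (jumpCDF g n t 0 (z + l * δ) - jumpCDF g n t 0 (z + δ)))) +
        (jumpCDF g n t 0 (z + l * δ) - (1 - l) * jumpCDF g n t 0 z
          - l * jumpCDF g n t 0 (z + δ))) := by ring
  rw [key, abs_mul, abs_of_nonneg hE0]
  refine (mul_le_of_le_one_left (abs_nonneg _) hE1).trans ((abs_add_le _ _).trans
    (add_le_add ((abs_add_le _ _).trans ?_) ?_))
  · rw [abs_mul, abs_mul, abs_of_nonneg hl0, abs_of_nonneg (sub_nonneg.mpr hl1)]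
    nlinarith
  · simp only [jumpCDF]
    split_ifs <;> simp only [abs_le] <;> first | (constructor <;> linarith) | grind

end SchemeData

/-! ### Discrete `L¹` stability -/

/-- A right shift of a nonnegative grid function that vanishes at negative indices does not increase
its sum over the grid: mass only leaves through the right end. -/
lemma sum_shift_le (M q : ℕ) (f : ℤ → ℝ) (hf : ∀ j, 0 ≤ f j) (hneg : ∀ j < 0, f j = 0) :
    ∑ j ∈ Finset.range (M + 1), f ((j : ℤ) - q) ≤ ∑ j ∈ Finset.range (M + 1), f (j : ℤ) := by
  induction q generalizing f with
  | zero => simp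
  | succ q ih =>
    have h1 := ih (fun j => f (j - 1)) (fun j => hf _) (fun j hj => hneg _ (by omega))
    have e : ∀ j : ℕ, f ((j : ℤ) - (q + 1 : ℕ)) = f ((j : ℤ) - q - 1) := fun j => by
      congr 1; push_cast; ring
    simp_rw [e]
    refine h1.trans ?_
    rw [Finset.sum_range_succ', Finset.sum_range_succ]
    simp only [Nat.cast_add, Nat.cast_one, add_sub_cancel_right, Nat.cast_zero, zero_sub]
    rw [hneg (-1) (by norm_num)]
    linarith [hf M]

/-- A half-open interval of length `b - a` contains at most `(b - a)/δ + 1` grid points. -/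
lemma sum_indicator_le (M : ℕ) {δ a b : ℝ} (hδ : 0 < δ) (ha : 0 ≤ a) (hab : a ≤ b) :
    ∑ j ∈ Finset.range (M + 1), δ * (if a ≤ (j : ℝ) * δ ∧ (j : ℝ) * δ < b then (1:ℝ) else 0)
      ≤ (b - a) + δ := by
  rw [← Finset.mul_sum, ← Finset.sum_filter, Finset.sum_const, nsmul_eq_mul, mul_one]
  have hsub : (Finset.range (M + 1)).filter
      (fun j : ℕ => a ≤ (j : ℝ) * δ ∧ (j : ℝ) * δ < b) ⊆ Finset.Ico ⌈a / δ⌉₊ ⌈b / δ⌉₊ := by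
    intro j hj
    obtain ⟨-, h1, h2⟩ := Finset.mem_filter.mp hj
    rw [Finset.mem_Ico]
    exact ⟨Nat.ceil_le.mpr ((div_le_iff₀ hδ).mpr h1), Nat.lt_ceil.mpr ((lt_div_iff₀ hδ).mpr h2)⟩
  have hc := Finset.card_le_card hsub
  rw [Nat.card_Ico] at hc
  have hle : ⌈a / δ⌉₊ ≤ ⌈b / δ⌉₊ := Nat.ceil_mono (by gcongr)
  have hc' : (((Finset.range (M + 1)).filter
      (fun j : ℕ => a ≤ (j : ℝ) * δ ∧ (j : ℝ) * δ < b)).card : ℝ) ≤ ⌈b / δ⌉₊ - ⌈a / δ⌉₊ := by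
    rw [← Nat.cast_sub hle]; exact_mod_cast hc
  have h1 := Nat.ceil_lt_add_one (div_nonneg (ha.trans hab) hδ.le)
  have h2 := Nat.le_ceil (a / δ)
  calc δ * _ ≤ δ * (b / δ + 1 - a / δ) := by
        refine mul_le_mul_of_nonneg_left (hc'.trans ?_) hδ.le
        linarith
    _ = _ := by field_simp; ring

/-- Discrete `L¹` stability: each step is a convex combination of right shifts of the error,
so truncation errors only accumulate additively. -/
lemma l1_stability (M N : ℕ) (δ ρ : ℝ) (hδ : 0 ≤ δ) (e : ℕ → ℤ → ℝ) (p lam : ℕ → ℝ)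
    (k : ℕ → ℤ) (τ : ℕ → ℕ → ℝ)
    (hneg : ∀ i, i ≤ N → ∀ j < 0, e i j = 0)
    (h0 : ∀ j : ℕ, j ≤ M → e 0 j = 0)
    (hp0 : ∀ i < N, 0 ≤ p i) (hp1 : ∀ i < N, p i ≤ 1)
    (hl0 : ∀ i < N, 0 ≤ lam i) (hl1 : ∀ i < N, lam i ≤ 1) (hk : ∀ i < N, 1 ≤ k i)
    (hstep : ∀ i < N, ∀ j : ℕ, j ≤ M → |e (i + 1) j - ((1 - p i) * e i j +
      p i * ((1 - lam i) * e i (j - k i) + lam i * e i (j - k i + 1)))| ≤ τ i j)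
    (hτ : ∀ i < N, ∑ j ∈ Finset.range (M + 1), δ * τ i j ≤ ρ) :
    ∀ i ≤ N, ∑ j ∈ Finset.range (M + 1), δ * |e i (j : ℤ)| ≤ i * ρ := by
  intro i
  induction i with
  | zero =>
    intro _
    refine le_of_eq ?_
    rw [Nat.cast_zero, zero_mul]
    refine Finset.sum_eq_zero fun j hj => ?_
    rw [h0 j (by simpa [Nat.lt_succ_iff] using hj)]; simp
  | succ i ih =>
    intro hi
    have hi' : i < N := hi
    specialize ih hi'.le
    have a1 := hp0 i hi'
    have a2 := hp1 i hi'
    have a3 := hl0 i hi'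
    have a4 := hl1 i hi'
    have hkk := hk i hi'
    have hshift : ∀ q : ℤ, 0 ≤ q →
        ∑ j ∈ Finset.range (M + 1), δ * |e i ((j : ℤ) - q)| ≤ i * ρ := fun q hq => by
      obtain ⟨r, rfl⟩ := Int.eq_ofNat_of_zero_le hq
      exact (sum_shift_le M r (fun j => δ * |e i j|) (fun j => by positivity)
        (fun j hj => by simp [hneg i hi'.le j hj])).trans ih
    have s1 := hshift (k i) (by omega)
    have s2 := hshift (k i - 1) (by omega)
    have hpt : ∀ j ∈ Finset.range (M + 1), δ * |e (i + 1) (j : ℤ)| ≤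
        (1 - p i) * (δ * |e i j|) + p i * ((1 - lam i) * (δ * |e i (j - k i)|)
          + lam i * (δ * |e i (j - (k i - 1))|)) + δ * τ i j := by
      intro j hj
      have hj' : j ≤ M := by simpa [Nat.lt_succ_iff] using hj
      have hs := hstep i hi' j hj'
      rw [← sub_add]
      have t1 : |e (i + 1) j| ≤ (1 - p i) * |e i j| + p i * ((1 - lam i) * |e i (j - k i)|
          + lam i * |e i (j - k i + 1)|) + τ i j := by
        have u := abs_le.mp hs
        have w : |(1 - p i) * e i j +
            p i * ((1 - lam i) * e i (j - k i) + lam i * e i (j - k i + 1))| ≤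
            (1 - p i) * |e i j| + p i * ((1 - lam i) * |e i (j - k i)|
              + lam i * |e i (j - k i + 1)|) := by
          refine (abs_add_le _ _).trans (add_le_add ?_ ?_)
          · rw [abs_mul, abs_of_nonneg (by linarith)]
          · rw [abs_mul, abs_of_nonneg a1]
            refine mul_le_mul_of_nonneg_left ((abs_add_le _ _).trans ?_) a1
            rw [abs_mul, abs_mul, abs_of_nonneg a3, abs_of_nonneg (by linarith)]
        have w' := abs_le.mp w
        rw [abs_le]
        constructor <;> linarith
      have := mul_le_mul_of_nonneg_left t1 hδ
      linarith
    refine (Finset.sum_le_sum hpt).trans ?_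
    simp only [Finset.sum_add_distrib, ← Finset.mul_sum] at *
    have r1 := mul_le_mul_of_nonneg_left ih (show 0 ≤ 1 - p i by linarith)
    have r2 := mul_le_mul_of_nonneg_left s1 (show 0 ≤ 1 - lam i by linarith)
    have r3 := mul_le_mul_of_nonneg_left s2 a3
    have r4 := mul_le_mul_of_nonneg_left (add_le_add r2 r3) a1
    have r5 := hτ i hi'
    push_cast
    linarith

/-! ### Convergence -/

/-- A step size bounded by a fixed length is dominated by its `γ`-th power. -/
lemma le_rpow_mul {h T γ : ℝ} (hh : 0 < h) (hT : h ≤ T) (hγ : γ ≤ 1) :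
    h ≤ T ^ (1 - γ) * h ^ γ := by
  calc h = h ^ (1 - γ) * h ^ γ := by rw [← Real.rpow_add hh]; simp
    _ ≤ _ := by
      refine mul_le_mul_of_nonneg_right ?_ (Real.rpow_nonneg hh.le _)
      exact Real.rpow_le_rpow hh.le hT (by linarith)

/-- Convergence of the scheme for globally extended data. -/
lemma SchemeData.scheme_bound {g n : ℝ → ℝ} {T K Lg Ln H γ : ℝ}
    (D : SchemeData g n T K Lg Ln H γ) {L : ℝ} (hL : 0 < L) :
    ∃ C : ℝ, 0 < C ∧
      ∀ δ h : ℝ, 0 < δ → 0 < h → ∀ M N : ℕ, 0 < M → 0 < N →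
        (M : ℝ) * δ = L → (N : ℝ) * h = T → h * K < 1 →
        ∀ k : ℕ → ℤ, (∀ i < N, k i = ⌊g ((i : ℝ) * h) / δ⌋ + 1) →
        ∀ lam : ℕ → ℝ, (∀ i < N, lam i = |δ * (k i : ℝ) - g ((i : ℝ) * h)| / δ) →
        ∀ FD : ℕ → ℤ → ℝ,
          (∀ i : ℕ, ∀ j : ℤ, j < 0 → FD i j = 0) →
          (∀ j : ℤ, 0 ≤ j → j ≤ (M : ℤ) → FD 0 j = poissonCDF g n ((j : ℝ) * δ) 0) →
          (∀ i : ℕ, i < N → ∀ j : ℤ, 0 ≤ j → j ≤ (M : ℤ) →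
            FD (i + 1) j =
              (1 - h * n ((i : ℝ) * h)) * FD i j +
                h * n ((i : ℝ) * h) *
                  ((1 - lam i) * FD i (j - k i) + lam i * FD i (j - k i + 1))) →
          ∑ j ∈ Finset.range (M + 1), δ * |FD N (j : ℤ) - poissonCDF g n ((j : ℝ) * δ) T|
            ≤ C * (h ^ γ + δ ^ γ) := by
  have hT := D.T_pos
  have hK := D.K_nonneg
  have hH := D.H_nonneg
  have hLg := D.Lg_nonneg
  have hLn := D.Ln_nonneg
  have hγ0 := D.γ_pos
  have hB := D.one_le_B
  -- `c₁`, `c₂` turn first-order terms `h`, `δ` into `h ^ γ`, `δ ^ γ`; `A₁`, `A₂` are the resulting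
  -- coefficients of the temporal and of the interpolation error away from the atom.
  obtain ⟨c₁, hc₁⟩ : ∃ c, c = T ^ (1 - γ) := ⟨_, rfl⟩
  obtain ⟨c₂, hc₂⟩ : ∃ c, c = L ^ (1 - γ) := ⟨_, rfl⟩
  have hc₁0 : 0 ≤ c₁ := hc₁ ▸ Real.rpow_nonneg hT.le _
  have hc₂0 : 0 ≤ c₂ := hc₂ ▸ Real.rpow_nonneg hL.le _
  obtain ⟨A₁, hA₁⟩ : ∃ A, A = Real.exp (2 * (K * T + 1)) * ((K * T + 1) * K ^ 2 * c₁ + (Ln * c₁ +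
    K * (K * H * Lg ^ γ))) + (2 * K ^ 2 + Ln) * c₁ := ⟨_, rfl⟩
  obtain ⟨A₂, hA₂⟩ : ∃ A, A = K * (Real.exp (K * T + 1) * (K * H)) := ⟨_, rfl⟩
  have hA₁0 : 0 ≤ A₁ := by rw [hA₁]; positivity
  have hA₂0 : 0 ≤ A₂ := by rw [hA₂]; positivity
  -- Here `2 * L` bounds `(M + 1) * δ`, and the last two terms come from the grid points near the
  -- atom; adding `1` makes the constant positive.
  refine ⟨T * (2 * L * (A₁ + A₂) + K * Lg * c₁ + 3 * K * c₂) + 1, by positivity, ?_⟩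
  intro δ h hδ hh M N hM hN hMδ hNh hKh k hk lam hlam FD hFneg hF0 hFstep
  have hM1 : (1:ℝ) ≤ M := by exact_mod_cast hM
  have hN1 : (1:ℝ) ≤ N := by exact_mod_cast hN
  have hδL : δ ≤ L := by nlinarith
  have hhT : h ≤ T := by nlinarith
  have htime : ∀ i < N, 0 ≤ (i : ℝ) * h ∧ (i : ℝ) * h + h ≤ T := fun i hi => by
    refine ⟨by positivity, ?_⟩
    have : (i : ℝ) + 1 ≤ N := by exact_mod_cast hi
    nlinarith
  obtain ⟨Q, hQ⟩ : ∃ Q, Q = Real.exp (K * T + 1) * (K * H * δ ^ γ) := ⟨_, rfl⟩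
  obtain ⟨E, hE⟩ : ∃ E, E = Real.exp (2 * (K * T + 1)) * ((K * T + 1) * (K * h) ^ 2 +
    (Ln * h ^ 2 + h * K * (K * H * (Lg * h) ^ γ))) + (2 * K ^ 2 + Ln) * h ^ 2 := ⟨_, rfl⟩
  have hQ0 : 0 ≤ Q := by rw [hQ]; positivity
  have hE0 : 0 ≤ E := by rw [hE]; positivity
  -- `ρ` bounds the discrete `L¹` norm of the truncation error of a single step.
  obtain ⟨ρ, hρ⟩ : ∃ ρ, ρ = 2 * L * (E + h * K * Q) + h * K * (Lg * h + δ) + h * K * (2 * δ) :=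
    ⟨_, rfl⟩
  have hkpos : ∀ i < N, 1 ≤ k i := fun i hi => by
    rw [hk i hi]
    have : 0 ≤ ⌊g ((i : ℝ) * h) / δ⌋ := Int.floor_nonneg.mpr (div_nonneg (D.g_nonneg _) hδ.le)
    omega
  have hkub : ∀ i < N, δ * (k i : ℝ) - g ((i : ℝ) * h) ≤ δ := fun i hi => by
    have h1 := Int.floor_le (g ((i : ℝ) * h) / δ)
    rw [le_div_iff₀ hδ] at h1
    rw [hk i hi]; push_cast; linarith
  have hklb : ∀ i < N, 0 ≤ δ * (k i : ℝ) - g ((i : ℝ) * h) := fun i hi => by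
    have h1 := (Int.lt_floor_add_one (g ((i : ℝ) * h) / δ)).le
    rw [div_le_iff₀ hδ] at h1
    rw [hk i hi]; push_cast; linarith
  have hlamδ : ∀ i < N, lam i * δ = δ * (k i : ℝ) - g ((i : ℝ) * h) := fun i hi => by
    rw [hlam i hi, abs_of_nonneg (hklb i hi), div_mul_cancel₀ _ hδ.ne']
  have hl0 : ∀ i < N, 0 ≤ lam i := fun i hi => by
    rw [hlam i hi]; positivity
  have hl1 : ∀ i < N, lam i ≤ 1 := fun i hi => by
    have := hkub i hi
    rw [← hlamδ i hi] at this
    exact le_of_mul_le_mul_right (by linarith) hδ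
  have hstab := l1_stability M N δ ρ hδ.le
    (fun i j => FD i j - poissonCDF g n ((j : ℝ) * δ) ((i : ℝ) * h))
    (fun i => h * n ((i : ℝ) * h)) lam k
    (fun i j => (E + h * K * Q)
      + h * K * (if g ((i : ℝ) * h) ≤ (j : ℝ) * δ ∧ (j : ℝ) * δ < g ((i : ℝ) * h + h)
          then 1 else 0)
      + h * K * (if ((k i : ℝ) - 1) * δ ≤ (j : ℝ) * δ ∧ (j : ℝ) * δ < (k i : ℝ) * δ
          then 1 else 0))
    (fun i hi j hj => by
      have hj' : (j : ℝ) * δ < 0 := mul_neg_of_neg_of_pos (by exact_mod_cast hj) hδ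
      simp only [hFneg i j hj, D.poissonCDF_neg (show 0 ≤ (i : ℝ) * h by positivity) hj', sub_zero])
    (fun j hj => by simp [hF0 j (by omega) (by exact_mod_cast hj)])
    (fun i _ => mul_nonneg hh.le (D.n_nonneg _))
    (fun i _ => (mul_le_mul_of_nonneg_left (D.n_le _) hh.le).trans hKh.le)
    hl0 hl1 hkpos ?_ ?_ N le_rfl
  · simp only [hNh, Int.cast_natCast] at hstab
    refine hstab.trans ?_
    have p0 : 0 ≤ h ^ γ := Real.rpow_nonneg hh.le _
    have q0 : 0 ≤ δ ^ γ := Real.rpow_nonneg hδ.le _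
    have p1 : h ≤ c₁ * h ^ γ := hc₁ ▸ le_rpow_mul hh hhT D.γ_le
    have q1 : δ ≤ c₂ * δ ^ γ := hc₂ ▸ le_rpow_mul hδ hδL D.γ_le
    have p2 : (Lg * h) ^ γ = Lg ^ γ * h ^ γ := Real.mul_rpow hLg hh.le
    have bE : E ≤ h * (A₁ * h ^ γ) := by
      have : E = h * (Real.exp (2 * (K * T + 1)) * ((K * T + 1) * K ^ 2 * h +
          (Ln * h + K * (K * H * (Lg ^ γ * h ^ γ)))) + (2 * K ^ 2 + Ln) * h) := by
        rw [hE, p2]; ring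
      rw [this]
      refine mul_le_mul_of_nonneg_left ?_ hh.le
      calc _ ≤ Real.exp (2 * (K * T + 1)) * ((K * T + 1) * K ^ 2 * (c₁ * h ^ γ) +
          (Ln * (c₁ * h ^ γ) + K * (K * H * (Lg ^ γ * h ^ γ)))) +
            (2 * K ^ 2 + Ln) * (c₁ * h ^ γ) := by gcongr
        _ = _ := by rw [hA₁]; ring
    have bQ : h * K * Q = h * (A₂ * δ ^ γ) := by rw [hQ, hA₂]; ring
    have bρ : ρ ≤ h * ((2 * L * (A₁ + A₂) + K * Lg * c₁ + 3 * K * c₂) * (h ^ γ + δ ^ γ)) := by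
      calc ρ = 2 * L * (E + h * (A₂ * δ ^ γ)) + h * (K * Lg) * h + h * (3 * K) * δ := by
            rw [hρ, bQ]; ring
        _ ≤ 2 * L * (h * (A₁ * h ^ γ) + h * (A₂ * δ ^ γ)) + h * (K * Lg) * (c₁ * h ^ γ)
            + h * (3 * K) * (c₂ * δ ^ γ) := by gcongr
        _ = h * (2 * L * (A₁ * h ^ γ + A₂ * δ ^ γ) + K * Lg * c₁ * h ^ γ
            + 3 * K * c₂ * δ ^ γ) := by ring
        _ ≤ _ := by
            refine mul_le_mul_of_nonneg_left ?_ hh.le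
            have s1 : 0 ≤ 2 * L * (A₁ * δ ^ γ + A₂ * h ^ γ) := by positivity
            have s2 : 0 ≤ K * Lg * c₁ * δ ^ γ := by positivity
            have s3 : 0 ≤ 3 * K * c₂ * h ^ γ := by positivity
            linarith
    have hfin := mul_le_mul_of_nonneg_left bρ (Nat.cast_nonneg N)
    rw [← mul_assoc, hNh] at hfin
    linarith
  · intro i hi j hj
    obtain ⟨ht0, htT⟩ := htime i hi
    have hst := D.poissonCDF_step ht0 hh.le htT ((j : ℝ) * δ)
    have hin := D.poissonCDF_interp ht0 (by linarith) (z := ((j : ℝ) - k i) * δ) hδ.le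
      (hl0 i hi) (hl1 i hi)
    -- The interpolated point `x_j - g t_i` lies in the cell starting at `z = (j - k i) * δ`.
    have z1 : ((j : ℝ) - k i) * δ + lam i * δ = (j : ℝ) * δ - g ((i : ℝ) * h) := by
      rw [hlamδ i hi]; ring
    have z2 : ((j : ℝ) - k i) * δ + δ = ((j : ℝ) - k i + 1) * δ := by ring
    have z3 : (0 ≤ ((j : ℝ) - k i) * δ + δ ∧ ((j : ℝ) - k i) * δ < 0) ↔
        (((k i : ℝ) - 1) * δ ≤ (j : ℝ) * δ ∧ (j : ℝ) * δ < (k i : ℝ) * δ) := by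
      constructor <;> rintro ⟨u, v⟩ <;> constructor <;> linarith
    simp only [z3] at hin
    rw [z1, z2, ← hQ] at hin
    have hup := hFstep i hi j (by omega) (by exact_mod_cast hj)
    simp only [hup, Int.cast_natCast, Int.cast_sub, Int.cast_add, Int.cast_one, Nat.cast_add,
      Nat.cast_one]
    rw [show ((i : ℝ) + 1) * h = (i : ℝ) * h + h by ring]
    have hn0 := D.n_nonneg ((i : ℝ) * h)
    have hnK := D.n_le ((i : ℝ) * h)
    set ν := n ((i : ℝ) * h)
    set F' := poissonCDF g n ((j : ℝ) * δ) ((i : ℝ) * h + h)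
    set F := poissonCDF g n ((j : ℝ) * δ) ((i : ℝ) * h)
    set Fg := poissonCDF g n ((j : ℝ) * δ - g ((i : ℝ) * h)) ((i : ℝ) * h)
    set F₁ := poissonCDF g n (((j : ℝ) - k i) * δ) ((i : ℝ) * h)
    set F₂ := poissonCDF g n (((j : ℝ) - k i + 1) * δ) ((i : ℝ) * h)
    set X := |Fg - ((1 - lam i) * F₁ + lam i * F₂)| with hX
    have hin' : h * ν * X ≤ h * K * (Q + _) :=
      mul_le_mul (by gcongr) hin (abs_nonneg _) (by positivity)
    rw [show ∀ a b c : ℝ, (1 - h * ν) * a + h * ν * ((1 - lam i) * b + lam i * c) - F' -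
        ((1 - h * ν) * (a - F) + h * ν * ((1 - lam i) * (b - F₁) + lam i * (c - F₂))) =
        -((F' - (1 - h * ν) * F - h * ν * Fg) + h * ν * (Fg - ((1 - lam i) * F₁ + lam i * F₂)))
        from fun a b c => by ring, abs_neg]
    refine (abs_add_le _ _).trans ?_
    rw [abs_mul, abs_of_nonneg (mul_nonneg hh.le hn0), ← hX]
    rw [hE]
    linarith
  · intro i hi
    obtain ⟨ht0, htT⟩ := htime i hi
    have hg1 : g ((i : ℝ) * h) ≤ g ((i : ℝ) * h + h) := D.g_mono (by linarith)
    have hg2 := (le_abs_self _).trans (D.g_lip ((i : ℝ) * h + h) ((i : ℝ) * h))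
    rw [add_sub_cancel_left, abs_of_pos hh] at hg2
    have hk1 : (1 : ℝ) ≤ k i := by exact_mod_cast hkpos i hi
    have i1 := sum_indicator_le M hδ (D.g_nonneg _) hg1
    have i2 := sum_indicator_le M hδ (a := ((k i : ℝ) - 1) * δ) (b := (k i : ℝ) * δ)
      (mul_nonneg (by linarith) hδ.le) (by linarith)
    have hsplit : ∀ a b c : ℝ, δ * (a + h * K * b + h * K * c) =
        δ * a + h * K * (δ * b) + h * K * (δ * c) := fun a b c => by ring
    simp_rw [hsplit]
    rw [Finset.sum_add_distrib, Finset.sum_add_distrib, ← Finset.mul_sum _ _ (h * K),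
      ← Finset.mul_sum _ _ (h * K), Finset.sum_const, Finset.card_range, nsmul_eq_mul, hρ]
    have hKh0 : 0 ≤ h * K := by positivity
    have j1 := mul_le_mul_of_nonneg_left i1 hKh0
    have j2 := mul_le_mul_of_nonneg_left i2 hKh0
    have j3 := mul_le_mul_of_nonneg_left hg2 hKh0
    have j4 : ((M : ℝ) + 1) * δ * (E + h * K * Q) ≤ 2 * L * (E + h * K * Q) := by
      refine mul_le_mul_of_nonneg_right ?_ (by positivity)
      linarith
    push_cast
    linarith

/-- The distribution function at times in `[0,T]` only sees the values of `g` and `n` there. -/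
lemma poissonCDF_congr {g g' n n' : ℝ → ℝ} {T t : ℝ} (ht : 0 ≤ t) (htT : t ≤ T)
    (hg : ∀ s ∈ Set.Icc 0 T, g s = g' s) (hn : ∀ s ∈ Set.Icc 0 T, n s = n' s) (x : ℝ) :
    poissonCDF g n x t = poissonCDF g' n' x t := by
  have h1 : ∫ s in (0:ℝ)..t, n s = ∫ s in (0:ℝ)..t, n' s := by
    refine intervalIntegral.integral_congr fun s hs => ?_
    rw [Set.uIcc_of_le ht] at hs
    exact hn s ⟨hs.1, hs.2.trans htT⟩
  have h2 : ∀ m : ℕ, (∫ s in Set.univ.pi (fun _ : Fin m => Set.Ioo (0:ℝ) t),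
        Set.indicator {p : Fin m → ℝ | ∑ i, g (p i) ≤ x} (fun p => ∏ i, n (p i)) s) =
      ∫ s in Set.univ.pi (fun _ : Fin m => Set.Ioo (0:ℝ) t),
        Set.indicator {p : Fin m → ℝ | ∑ i, g' (p i) ≤ x} (fun p => ∏ i, n' (p i)) s := by
    intro m
    refine setIntegral_congr_fun (MeasurableSet.univ_pi fun _ => measurableSet_Ioo) fun p hp => ?_
    have hp' : ∀ i, p i ∈ Set.Icc 0 T := fun i =>
      ⟨(hp i trivial).1.le, (hp i trivial).2.le.trans htT⟩
    have e1 : ∑ i, g (p i) = ∑ i, g' (p i) := Finset.sum_congr rfl fun i _ => hg _ (hp' i)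
    have e2 : ∏ i, n (p i) = ∏ i, n' (p i) := Finset.prod_congr rfl fun i _ => hn _ (hp' i)
    simp only [Set.indicator_apply, Set.mem_ofPred_eq, e1, e2]
  unfold poissonCDF
  simp_rw [h1, h2]

/-- **Convergence of the forward finite-difference scheme for the Kolmogorov–Feller
equation** (Theorem 4.1 of the paper).  Let `g : [0,T] → [0,∞)` be strictly increasing,
continuous, Lipschitz with constant `Lg`, with `γ`-Hölder inverse, and let
`n : [0,T] → [0,∞)` be Lipschitz with constant `Ln` and supremum `n*_T`.  Then there is
a constant `C > 0`, depending only on the data, such that for all step sizes `δ, h > 0`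
with `M·δ = L`, `N·h = T` and satisfying the stability criterion `h·n*_T < 1`, the
finite-difference approximation `F^i_j` (with `F⁰_j = F(x_j,0)`, the convention
`F^i_m = 0` for `m < 0`, and the forward update with `k_i = ⌊g(t_i)/δ⌋ + 1`,
`λ_i = |δ k_i − g(t_i)|/δ`) satisfies the discrete `L¹` error bound
`Σ_{j=0}^M δ·|F^N_j − F(x_j, T)| ≤ C·(h^γ + δ^γ)`. -/
theorem finite_difference_scheme_convergence (T L : ℝ) (hT : 0 < T) (hL : 0 < L)
    (g ginv n : ℝ → ℝ) (Lg Ln γ : ℝ) (hγ0 : 0 < γ) (hγ1 : γ ≤ 1)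
    (hg_nonneg : ∀ s ∈ Set.Icc (0:ℝ) T, 0 ≤ g s)
    (hg_mono : StrictMonoOn g (Set.Icc 0 T))
    (hg_cont : ContinuousOn g (Set.Icc 0 T))
    (hg_lip : ∀ s ∈ Set.Icc (0:ℝ) T, ∀ u ∈ Set.Icc (0:ℝ) T, |g s - g u| ≤ Lg * |s - u|)
    (hginv : ∀ s ∈ Set.Icc (0:ℝ) T, ginv (g s) = s)
    (hginv_holder : ∃ H : ℝ, ∀ x ∈ Set.Ioo (g 0) (g T), ∀ y ∈ Set.Ioo (g 0) (g T),
      |ginv x - ginv y| ≤ H * |x - y| ^ γ)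
    (hn_nonneg : ∀ s ∈ Set.Icc (0:ℝ) T, 0 ≤ n s)
    (hn_lip : ∀ s ∈ Set.Icc (0:ℝ) T, ∀ u ∈ Set.Icc (0:ℝ) T, |n s - n u| ≤ Ln * |s - u|)
    (nstar : ℝ) (hnstar : IsLUB (n '' Set.Icc 0 T) nstar) :
    ∃ C : ℝ, 0 < C ∧
      ∀ δ h : ℝ, 0 < δ → 0 < h → ∀ M N : ℕ, 0 < M → 0 < N →
        (M : ℝ) * δ = L → (N : ℝ) * h = T → h * nstar < 1 →
        ∀ k : ℕ → ℤ, (∀ i : ℕ, k i = ⌊g ((i : ℝ) * h) / δ⌋ + 1) →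
        ∀ lam : ℕ → ℝ, (∀ i : ℕ, lam i = |δ * (k i : ℝ) - g ((i : ℝ) * h)| / δ) →
        ∀ FD : ℕ → ℤ → ℝ,
          (∀ i : ℕ, ∀ j : ℤ, j < 0 → FD i j = 0) →
          (∀ j : ℤ, 0 ≤ j → j ≤ (M : ℤ) → FD 0 j = poissonCDF g n ((j : ℝ) * δ) 0) →
          (∀ i : ℕ, i < N → ∀ j : ℤ, 0 ≤ j → j ≤ (M : ℤ) →
            FD (i + 1) j =
              (1 - h * n ((i : ℝ) * h)) * FD i j +
                h * n ((i : ℝ) * h) *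
                  ((1 - lam i) * FD i (j - k i) + lam i * FD i (j - k i + 1))) →
          ∑ j ∈ Finset.range (M + 1), δ * |FD N (j : ℤ) - poissonCDF g n ((j : ℝ) * δ) T|
            ≤ C * (h ^ γ + δ ^ γ) := by
  obtain ⟨H, hH⟩ := hginv_holder
  have h0mem : (0:ℝ) ∈ Set.Icc 0 T := ⟨le_rfl, hT.le⟩
  have hTmem : T ∈ Set.Icc (0:ℝ) T := ⟨hT.le, le_rfl⟩
  have hLg0 : 0 ≤ Lg := by
    have := (abs_nonneg _).trans (hg_lip T hTmem 0 h0mem)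
    rw [sub_zero, abs_of_pos hT] at this
    exact nonneg_of_mul_nonneg_left this hT
  have hLn0 : 0 ≤ Ln := by
    have := (abs_nonneg _).trans (hn_lip T hTmem 0 h0mem)
    rw [sub_zero, abs_of_pos hT] at this
    exact nonneg_of_mul_nonneg_left this hT
  have hn_le : ∀ s ∈ Set.Icc (0:ℝ) T, n s ≤ nstar := fun s hs => hnstar.1 ⟨s, hs, rfl⟩
  -- `P` is the retraction onto `[0,T]`; composing with it extends `g` and `n` by constants.
  set P : ℝ → ℝ := fun s => (Set.projIcc 0 T hT.le s : ℝ) with hP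
  have hPmem : ∀ s, P s ∈ Set.Icc 0 T := fun s => (Set.projIcc 0 T hT.le s).2
  have hPid : ∀ s ∈ Set.Icc 0 T, P s = s := fun s hs => by
    simp only [hP, Set.projIcc_of_mem hT.le hs]
  have hPc : Continuous P := continuous_subtype_val.comp continuous_projIcc
  have hPlip : ∀ s u, |P s - P u| ≤ |s - u| := fun s u => by
    have := (LipschitzWith.projIcc hT.le).dist_le_mul s u
    rw [NNReal.coe_one, one_mul, Subtype.dist_eq] at this
    exact this
  have hPmono : Monotone P := fun s u hsu => Set.monotone_projIcc hT.le hsu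
  have hn_cont : ContinuousOn n (Set.Icc 0 T) := by
    refine (LipschitzOnWith.of_dist_le_mul (K := Ln.toNNReal) fun s hs u hu => ?_).continuousOn
    rw [Real.coe_toNNReal _ hLn0]
    exact hn_lip s hs u hu
  -- The Hölder constant `H` is not assumed nonnegative, so it is replaced by `|H|`.
  have D : SchemeData (fun s => g (P s)) (fun s => n (P s)) T nstar Lg Ln |H| γ :=
    { T_pos := hT
      K_nonneg := (hn_nonneg 0 h0mem).trans (hn_le 0 h0mem)
      Lg_nonneg := hLg0
      Ln_nonneg := hLn0
      H_nonneg := abs_nonneg H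
      γ_pos := hγ0
      γ_le := hγ1
      g_cont := hg_cont.comp_continuous hPc hPmem
      g_nonneg := fun s => hg_nonneg _ (hPmem s)
      g_mono := fun s u hsu => hg_mono.monotoneOn (hPmem s) (hPmem u) (hPmono hsu)
      g_lip := fun s u => (hg_lip _ (hPmem s) _ (hPmem u)).trans
        (mul_le_mul_of_nonneg_left (hPlip s u) hLg0)
      g_inv := fun s hs u hu => by
        have hs' : s ∈ Set.Icc 0 T := ⟨hs.1.le, hs.2.le⟩
        have hu' : u ∈ Set.Icc 0 T := ⟨hu.1.le, hu.2.le⟩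
        have h1 := hH (g s) ⟨hg_mono h0mem hs' hs.1, hg_mono hs' hTmem hs.2⟩
          (g u) ⟨hg_mono h0mem hu' hu.1, hg_mono hu' hTmem hu.2⟩
        rw [hginv s hs', hginv u hu'] at h1
        simp only [hPid s hs', hPid u hu']
        exact h1.trans (mul_le_mul_of_nonneg_right (le_abs_self H)
          (Real.rpow_nonneg (abs_nonneg _) _))
      n_cont := hn_cont.comp_continuous hPc hPmem
      n_nonneg := fun s => hn_nonneg _ (hPmem s)
      n_le := fun s => hn_le _ (hPmem s)
      n_lip := fun s u => (hn_lip _ (hPmem s) _ (hPmem u)).trans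
        (mul_le_mul_of_nonneg_left (hPlip s u) hLn0) }
  obtain ⟨C, hC, hmain⟩ := D.scheme_bound hL
  refine ⟨C, hC, ?_⟩
  intro δ h hδ hh M N hM hN hMδ hNh hst k hk lam hlam FD hneg h0 hstep
  have hcdf : ∀ t ∈ Set.Icc 0 T, ∀ x, poissonCDF g n x t =
      poissonCDF (fun s => g (P s)) (fun s => n (P s)) x t := fun t ht x =>
    poissonCDF_congr ht.1 ht.2 (fun s hs => by rw [hPid s hs]) (fun s hs => by rw [hPid s hs]) x
  have htime : ∀ i : ℕ, i < N → P ((i : ℝ) * h) = (i : ℝ) * h := fun i hi => by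
    refine hPid _ ⟨by positivity, ?_⟩
    rw [← hNh]
    exact mul_le_mul_of_nonneg_right (by exact_mod_cast hi.le) hh.le
  simp_rw [hcdf T hTmem]
  refine hmain δ h hδ hh M N hM hN hMδ hNh hst k (fun i hi => ?_) lam (fun i hi => ?_) FD hneg
    (fun j hj hjM => ?_) (fun i hi j hj hjM => ?_)
  · simp only [htime i hi, hk i]
  · simp only [htime i hi, hlam i]
  · rw [h0 j hj hjM, hcdf 0 h0mem]
  · simp only [htime i hi]
    exact hstep i hi j hj hjM
end
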